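/- Let T be a complete CLO theory in a finite language L_κ (i.e., κ < ℵ₀). If T is locally simple, then T is ℵ₀-categorical. -/

import Mathlib

open FirstOrder Language Set

/-- Relation symbols of the language `L_κ` of colored linear orders:
a binary `<` and a unary color predicate for each `i : ι`. -/
inductive CLORel (ι : Type) : ℕ → Type
  | lt : CLORel ι 2
  | color (i : ι) : CLORel ι 1

/-- The language `L_κ`, where the colors are indexed by `ι`. -/
def CLOLang (ι : Type) : Language :=
  ⟨fun _ => Empty, CLORel ι⟩

/-- Interpretation of the relation symbols on a linear order `M` with colors `c`. -/
def cloRelMap {ι M : Type} [LinearOrder M] (c : ι → Set M) :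
    ∀ {n}, CLORel ι n → (Fin n → M) → Prop
  | _, .lt => fun v => v 0 < v 1
  | _, .color i => fun v => v 0 ∈ c i

/-- The canonical `L_κ`-structure (a colored linear order, CLO) on a linear
order `M` whose colors are given by `c : ι → Set M`. -/
def CLOStr (ι M : Type) [LinearOrder M] (c : ι → Set M) : (CLOLang ι).Structure M where
  funMap := fun f => Empty.elim f
  RelMap := cloRelMap c

/-- Satisfaction of an `L_κ`-formula in the CLO `(M, <, c)`. -/
def Sat {ι : Type} (M : Type) [LinearOrder M] (c : ι → Set M) {α : Type}
    (φ : (CLOLang ι).Formula α) (v : α → M) : Prop :=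
  letI := CLOStr ι M c
  φ.Realize v

/-- The induced colors on a subset of a CLO. -/
def subColor {ι M : Type} (c : ι → Set M) (s : Set M) : ι → Set s :=
  fun i => {x | (x : M) ∈ c i}

/-- Elementary equivalence of CLOs. -/
def CLOEquiv (ι : Type) (M : Type) [LinearOrder M] (cM : ι → Set M)
    (N : Type) [LinearOrder N] (cN : ι → Set N) : Prop :=
  letI := CLOStr ι M cM
  letI := CLOStr ι N cN
  M ≅[CLOLang ι] N

/-- Isomorphism of CLOs (as `L_κ`-structures). -/
def CLOIso (ι : Type) (M : Type) [LinearOrder M] (cM : ι → Set M)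
    (N : Type) [LinearOrder N] (cN : ι → Set N) : Prop :=
  letI := CLOStr ι M cM
  letI := CLOStr ι N cN
  Nonempty (M ≃[CLOLang ι] N)

/-- The complete theory of a CLO. -/
def CLOTheory (ι : Type) (M : Type) [LinearOrder M] (c : ι → Set M) : (CLOLang ι).Theory :=
  letI := CLOStr ι M c
  (CLOLang ι).completeTheory M

/-- The induced colors on a lexicographic sum `Σₗ i, A i` of CLOs. -/
def sigmaColor {ι I : Type} {A : I → Type} (c : ∀ i, ι → Set (A i)) :
    ι → Set (Σₗ i, A i) :=
  fun k => {x | (ofLex x).2 ∈ c (ofLex x).1 k}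

/-- The induced colors on a two-term lexicographic sum `α ⊕ₗ β` of CLOs. -/
def sumColor2 {ι α β : Type} (ca : ι → Set α) (cb : ι → Set β) : ι → Set (α ⊕ₗ β) :=
  fun k => {x | Sum.elim (· ∈ ca k) (· ∈ cb k) (ofLex x)}

/-- The set defined by a parameter-free formula in one variable in a CLO. -/
def FmlSet (ι : Type) (M : Type) [LinearOrder M] (c : ι → Set M)
    (φ : (CLOLang ι).Formula Unit) : Set M :=
  {x | Sat M c φ fun _ => x}

/-- A CLO is self-additive if it has more than one point and its only
convex parameter-free-definable subsets are `∅` and the whole order. -/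
def SelfAdditive (ι : Type) (M : Type) [LinearOrder M] (c : ι → Set M) : Prop :=
  Nontrivial M ∧
    ∀ φ : (CLOLang ι).Formula Unit, (FmlSet ι M c φ).OrdConnected →
      FmlSet ι M c φ = ∅ ∨ FmlSet ι M c φ = Set.univ

/-- `a ∼ b`: some set definable with parameter `a` is convex, bounded above and
below, and contains both `a` and `b`. -/
def SimRel (ι : Type) {M : Type} [LinearOrder M] (c : ι → Set M) (a b : M) : Prop :=
  ∃ φ : (CLOLang ι).Formula (Unit ⊕ Unit),
    (Set.OrdConnected {x | Sat M c φ (Sum.elim (fun _ => x) fun _ => a)}) ∧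
    (∃ u : M, ∀ z ∈ {x | Sat M c φ (Sum.elim (fun _ => x) fun _ => a)}, z < u) ∧
    (∃ l : M, ∀ z ∈ {x | Sat M c φ (Sum.elim (fun _ => x) fun _ => a)}, l < z) ∧
    a ∈ {x | Sat M c φ (Sum.elim (fun _ => x) fun _ => a)} ∧
    b ∈ {x | Sat M c φ (Sum.elim (fun _ => x) fun _ => a)}

/-- `f : M → N` is an elementary map of CLOs. -/
def IsElemMap (ι : Type) {M N : Type} [LinearOrder M] [LinearOrder N]
    (cM : ι → Set M) (cN : ι → Set N) (f : M → N) : Prop :=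
  ∀ (k : ℕ) (φ : (CLOLang ι).Formula (Fin k)) (v : Fin k → M),
    Sat M cM φ v ↔ Sat N cN φ (f ∘ v)

/-- A subset of a CLO, with its induced structure, is an elementary substructure. -/
def IsElemSubset (ι : Type) (B : Type) [LinearOrder B] (cB : ι → Set B) (s : Set B) : Prop :=
  IsElemMap ι (subColor cB s) cB (Subtype.val : s → B)

/-- A complete `L_κ`-theory is ℵ₀-categorical: any two at-most-countable CLO
models of it are isomorphic.  (Finite and empty models are allowed.) -/
def Aleph0CatTheory (ι : Type) (T : (CLOLang ι).Theory) : Prop :=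
  ∀ (N₁ N₂ : Type) (i₁ : LinearOrder N₁) (i₂ : LinearOrder N₂)
    (c₁ : ι → Set N₁) (c₂ : ι → Set N₂),
    Countable N₁ → Countable N₂ →
    (letI := i₁; CLOTheory ι N₁ c₁) = T → (letI := i₂; CLOTheory ι N₂ c₂) = T →
    (letI := i₁; letI := i₂; CLOIso ι N₁ c₁ N₂ c₂)

/-- `φ` is a convex formula for the complete theory of the CLO `(M₀, c₀)`:
its realizations in every model of that theory form a convex set. -/
def ConvexFml (ι : Type) (M₀ : Type) [LinearOrder M₀] (c₀ : ι → Set M₀)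
    (φ : (CLOLang ι).Formula Unit) : Prop :=
  ∀ (B : Type) (iB : LinearOrder B) (cB : ι → Set B),
    (letI := iB; CLOEquiv ι B cB M₀ c₀) → (letI := iB; Set.OrdConnected (FmlSet ι B cB φ))

/-- The set of common realizations of a set of one-variable formulas in a CLO. -/
def TypeSet (ι : Type) (M : Type) [LinearOrder M] (c : ι → Set M)
    (Φ : Set ((CLOLang ι).Formula Unit)) : Set M :=
  {x | ∀ φ ∈ Φ, Sat M c φ fun _ => x}

/-- A set of one-variable formulas is consistent with the complete theory of
`(M₀, c₀)`: it is realized in some model of that theory. -/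
def TypeConsistent (ι : Type) (M₀ : Type) [LinearOrder M₀] (c₀ : ι → Set M₀)
    (Φ : Set ((CLOLang ι).Formula Unit)) : Prop :=
  ∃ (B : Type) (iB : LinearOrder B) (cB : ι → Set B),
    (letI := iB; CLOEquiv ι B cB M₀ c₀) ∧ (letI := iB; ∃ b : B, b ∈ TypeSet ι B cB Φ)

/-- `Φ` is a convex type of the complete theory of `(M₀, c₀)`: a maximal
consistent set of convex formulas over `∅`.  `IT(T)` is the set of all such. -/
def IsConvexType (ι : Type) (M₀ : Type) [LinearOrder M₀] (c₀ : ι → Set M₀)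
    (Φ : Set ((CLOLang ι).Formula Unit)) : Prop :=
  (∀ φ ∈ Φ, ConvexFml ι M₀ c₀ φ) ∧ TypeConsistent ι M₀ c₀ Φ ∧
    ∀ ψ, ConvexFml ι M₀ c₀ ψ → TypeConsistent ι M₀ c₀ (insert ψ Φ) → ψ ∈ Φ

/-- A convex type is isolated if it contains a convex formula contained in no
other convex type. -/
def IsolatedCT (ι : Type) (M₀ : Type) [LinearOrder M₀] (c₀ : ι → Set M₀)
    (Φ : Set ((CLOLang ι).Formula Unit)) : Prop :=
  ∃ φ ∈ Φ, ConvexFml ι M₀ c₀ φ ∧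
    ∀ Ψ, IsConvexType ι M₀ c₀ Ψ → φ ∈ Ψ → Ψ = Φ

/-- A CLO is ℵ₀-saturated: every finitely-satisfiable set of formulas in one
variable over finitely many parameters is realized. -/
def Aleph0Saturated (ι : Type) (S : Type) [LinearOrder S] (cS : ι → Set S) : Prop :=
  ∀ (m : ℕ) (a : Fin m → S) (p : Set ((CLOLang ι).Formula (Unit ⊕ Fin m))),
    (∀ q : Finset ((CLOLang ι).Formula (Unit ⊕ Fin m)), ↑q ⊆ p →
      ∃ x : S, ∀ φ ∈ q, Sat S cS φ (Sum.elim (fun _ => x) a)) →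
    ∃ x : S, ∀ φ ∈ p, Sat S cS φ (Sum.elim (fun _ => x) a)

/-- A CLO is strongly ℵ₀-homogeneous: finite tuples with the same complete type
are conjugate under an automorphism. -/
def StronglyAleph0Homogeneous (ι : Type) (S : Type) [LinearOrder S] (cS : ι → Set S) : Prop :=
  ∀ (m : ℕ) (a b : Fin m → S),
    (∀ φ : (CLOLang ι).Formula (Fin m), Sat S cS φ a ↔ Sat S cS φ b) →
    ∃ g : S ≃ S, (∀ x y : S, x < y ↔ g x < g y) ∧
      (∀ (k : ι) (x : S), x ∈ cS k ↔ g x ∈ cS k) ∧ ∀ i, g (a i) = b i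

/-- Sufficiently saturated: ℵ₀-saturated and strongly ℵ₀-homogeneous. -/
def SuffSaturated (ι : Type) (S : Type) [LinearOrder S] (cS : ι → Set S) : Prop :=
  Aleph0Saturated ι S cS ∧ StronglyAleph0Homogeneous ι S cS

/-- The complete theory of `(M₀, c₀)` is locally simple: for every sufficiently
saturated model `S` and every convex type `Φ`, the theory `T_Φ = Th(Φ(S))` is
ℵ₀-categorical. -/
def LocallySimple (ι : Type) (M₀ : Type) [LinearOrder M₀] (c₀ : ι → Set M₀) : Prop :=
  ∀ (S : Type) [LinearOrder S], ∀ (cS : ι → Set S),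
    CLOEquiv ι S cS M₀ c₀ → SuffSaturated ι S cS →
    ∀ Φ, IsConvexType ι M₀ c₀ Φ →
      Aleph0CatTheory ι
        (CLOTheory ι (TypeSet ι S cS Φ) (subColor cS (TypeSet ι S cS Φ)))

/-- A finite set of pairs is a partial isomorphism of CLOs: it preserves `<`,
equality, and each color, in both directions. -/
def IsPartialIso (ι : Type) {M N : Type} [LinearOrder M] [LinearOrder N]
    (cM : ι → Set M) (cN : ι → Set N) (f : Finset (M × N)) : Prop :=
  ∀ p ∈ f, ∀ q ∈ f,
    (p.1 < q.1 ↔ p.2 < q.2) ∧ (p.1 = q.1 ↔ p.2 = q.2) ∧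
    ∀ k, p.1 ∈ cM k ↔ p.2 ∈ cN k

/-- Back-and-forth equivalence of CLOs: a nonempty family of finite partial
isomorphisms with the back-and-forth extension properties. -/
def BackForthEquiv (ι : Type) (M : Type) [LinearOrder M] (cM : ι → Set M)
    (N : Type) [LinearOrder N] (cN : ι → Set N) : Prop :=
  ∃ F : Set (Finset (M × N)), F.Nonempty ∧ (∀ f ∈ F, IsPartialIso ι cM cN f) ∧
    (∀ f ∈ F, ∀ m : M, ∃ g ∈ F, f ⊆ g ∧ ∃ n : N, (m, n) ∈ g) ∧
    (∀ f ∈ F, ∀ n : N, ∃ g ∈ F, f ⊆ g ∧ ∃ m : M, (m, n) ∈ g)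

/-- The set of complete theories `Th(Φ(A))` as `A` ranges over models of the
complete theory of `(M₀, c₀)` (including the theory of the empty structure,
in case `Φ` is omitted). -/
def TheoriesAt (ι : Type) (M₀ : Type) [LinearOrder M₀] (c₀ : ι → Set M₀)
    (Φ : Set ((CLOLang ι).Formula Unit)) : Set ((CLOLang ι).Theory) :=
  {T | ∃ (A : Type) (iA : LinearOrder A) (cA : ι → Set A),
    (letI := iA; CLOEquiv ι A cA M₀ c₀) ∧
    T = (letI := iA; CLOTheory ι (TypeSet ι A cA Φ) (subColor cA (TypeSet ι A cA Φ)))}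

section GeneralModelTheory

variable {L : FirstOrder.Language.{0, 0}}

/-- Existential quantification over an arbitrary (possibly infinite) family of variables. -/
theorem exists_formula_realize_iff_exists {X Y : Type} (φ : L.Formula (X ⊕ Y)) :
    ∃ ψ : L.Formula X, ∀ (N : Type) [L.Structure N] [Nonempty N] (u : X → N),
      ψ.Realize u ↔ ∃ w : Y → N, φ.Realize (Sum.elim u w) := by
  classical
  let Z := {y : Y // Sum.inr y ∈ φ.freeVarFinset}
  have : Finite Z := Finite.of_injective
    (fun z : Z => (⟨Sum.inr z.1, z.2⟩ : φ.freeVarFinset))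
    (fun a b h => Subtype.ext (by simpa using h))
  let f : φ.freeVarFinset → X ⊕ Z := fun a =>
    match a with
    | ⟨Sum.inl x, _⟩ => Sum.inl x
    | ⟨Sum.inr y, h⟩ => Sum.inr ⟨y, h⟩
  refine ⟨Formula.iExs Z (BoundedFormula.restrictFreeVar φ f), fun N _ _ u => ?_⟩
  rw [Formula.realize_iExs]
  constructor
  · rintro ⟨w, hw⟩
    refine ⟨fun y => if h : Sum.inr y ∈ φ.freeVarFinset then w ⟨y, h⟩ else Classical.arbitrary N,
      ?_⟩
    refine (BoundedFormula.realize_restrictFreeVar _ ?_).1 hw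
    rintro ⟨x | y, h⟩
    · simp [f]
    · simp [f, h]
  · rintro ⟨w, hw⟩
    refine ⟨fun z => w z.1, ?_⟩
    refine (BoundedFormula.realize_restrictFreeVar _ ?_).2 hw
    rintro ⟨x | y, h⟩ <;> simp [f]

/-- `E : M → N` is an elementary embedding such that `N` realizes every small type over `M`. -/
def RealizesTypesOver {M N : Type} [L.Structure M] [L.Structure N] (E : M ↪ₑ[L] N) : Prop :=
  ∀ Γ : Set (L.Formula (M ⊕ M)),
    (∀ q : Finset (L.Formula (M ⊕ M)), ↑q ⊆ Γ →
      ∃ v : M → M, ∀ φ ∈ q, φ.Realize (Sum.elim id v)) →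
    ∃ v : M → N, ∀ φ ∈ Γ, φ.Realize (Sum.elim E v)

theorem exists_realizesTypesOver (M : Type) [L.Structure M] [Nonempty M] :
    ∃ (N : Type) (_ : L.Structure N) (_ : Nonempty N) (E : M ↪ₑ[L] N), RealizesTypesOver E := by
  classical
  let I := Finset (L.Formula (M ⊕ M))
  let U : Ultrafilter I := Ultrafilter.of Filter.atTop
  have hU : (U : Filter I) ≤ Filter.atTop := Ultrafilter.of_le _
  let N := (U : Filter I).Product (fun _ => M)
  let E : M ↪ₑ[L] N :=
    { toFun := fun m => ((fun _ => m : I → M) : (U : Filter I).Product fun _ => M)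
      map_formula' := fun n φ x => by
        have := Ultraproduct.realize_formula_cast (u := U) (M := fun _ : I => M) φ
          (fun i _ => x i)
        refine Iff.trans this ?_
        simp }
  refine ⟨N, inferInstance, inferInstance, E, fun Γ hΓ => ?_⟩
  choose w hw using fun i : I => hΓ (i.filter (· ∈ Γ)) (by intro φ; simp)
  refine ⟨fun m => ((fun i => w i m : I → M) : (U : Filter I).Product fun _ => M), fun φ hφ => ?_⟩
  have := Ultraproduct.realize_formula_cast (u := U) (M := fun _ : I => M) φ
    (Sum.elim (fun m _ => m) (fun m i => w i m))
  have h2 : ∀ᶠ i : I in U, φ.Realize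
      (fun a => (Sum.elim (fun m _ => m) (fun m i => w i m) : M ⊕ M → I → M) a i) := by
    refine hU ((Filter.eventually_ge_atTop ({φ} : I)).mono fun i hi => ?_)
    have := hw i φ (by simpa [hφ] using Finset.singleton_subset_iff.1 hi)
    convert this using 1
    ext (a | a) <;> rfl
  have h3 := this.2 h2
  have h4 : (Sum.elim E fun m => ((fun i => w i m : I → M) : (U : Filter I).Product fun _ => M)) =
      fun a => (((Sum.elim (fun m _ => m) (fun m i => w i m) : M ⊕ M → I → M) a : I → M) :
        (U : Filter I).Product fun _ => M) := by
    funext a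
    rcases a with a | a <;> rfl
  rw [h4]
  exact h3

/-- Amalgamation property: partial elementary maps extend to elementary embeddings. -/
theorem RealizesTypesOver.exists_extension {M N : Type} [L.Structure M] [L.Structure N]
    [Nonempty M] {E : M ↪ₑ[L] N} (hE : RealizesTypesOver E) {X : Type} (p q : X → M)
    (hpq : ∀ φ : L.Formula X, φ.Realize p ↔ φ.Realize q) :
    ∃ h : M ↪ₑ[L] N, ∀ x, h (p x) = E (q x) := by
  classical
  let Γ : Set (L.Formula (M ⊕ M)) :=
    {φ | ∃ ψ : L.Formula M, ψ.Realize id ∧ φ = ψ.relabel Sum.inr} ∪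
    {φ | ∃ x : X, φ = Term.equal (Term.var (Sum.inr (p x))) (Term.var (Sum.inl (q x)))}
  have hinj : ∀ x y, p x = p y → q x = q y := by
    intro x y h
    have := (hpq (Term.equal (Term.var x) (Term.var y))).1 (by simpa using h)
    simpa using this
  have key : ∀ ψ : L.Formula M, ψ.Realize id →
      ∃ v : M → M, ψ.Realize v ∧ ∀ x, v (p x) = q x := by
    intro ψ hψ
    let r : M → X ⊕ M := fun m => if h : ∃ x, p x = m then Sum.inl h.choose else Sum.inr m
    obtain ⟨χ, hχ⟩ := exists_formula_realize_iff_exists (ψ.relabel r)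
    have h1 : χ.Realize p := by
      refine (hχ M p).2 ⟨id, ?_⟩
      rw [Formula.realize_relabel]
      convert hψ using 1
      ext m
      by_cases h : ∃ x, p x = m
      · simp [r, h, h.choose_spec]
      · simp [r, h]
    obtain ⟨w, hw⟩ := (hχ M q).1 ((hpq χ).1 h1)
    rw [Formula.realize_relabel] at hw
    refine ⟨_, hw, fun x => ?_⟩
    have h : ∃ y, p y = p x := ⟨x, rfl⟩
    simp only [Function.comp, r, h, dif_pos, Sum.elim_inl]
    exact hinj _ _ h.choose_spec
  obtain ⟨v, hv⟩ := hE Γ (by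
    intro s hs
    let t : Finset (L.Formula M) := (s.image fun φ =>
      if h : ∃ ψ : L.Formula M, ψ.Realize id ∧ φ = ψ.relabel Sum.inr then h.choose else ⊤)
    obtain ⟨v, hv, hv2⟩ := key (Formula.iInf (fun ψ : t => (ψ : L.Formula M))) (by
      rw [Formula.realize_iInf]
      rintro ⟨ψ, hψ⟩
      obtain ⟨φ, _, rfl⟩ := Finset.mem_image.1 hψ
      dsimp only
      split_ifs with h
      · exact h.choose_spec.1
      · simp)
    refine ⟨v, fun φ hφ => ?_⟩
    rw [Formula.realize_iInf] at hv
    rcases hs hφ with h | ⟨x, rfl⟩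
    · have := hv ⟨_, Finset.mem_image_of_mem _ hφ⟩
      have h' : ∃ ψ : L.Formula M, ψ.Realize id ∧ φ = ψ.relabel Sum.inr := h
      simp only [h', dif_pos] at this
      rw [h'.choose_spec.2, Formula.realize_relabel]
      simpa using this
    · simp [hv2])
  refine ⟨⟨v, ?_⟩, ?_⟩
  · intro n φ x
    have : ∀ φ : L.Formula (Fin n), φ.Realize x → φ.Realize (v ∘ x) := by
      intro φ hφ
      have := hv ((φ.relabel x).relabel Sum.inr)
        (Or.inl ⟨φ.relabel x, by simpa [Formula.realize_relabel] using hφ, rfl⟩)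
      simpa [Formula.realize_relabel] using this
    refine ⟨fun h => ?_, this φ⟩
    by_contra hn
    exact (Formula.realize_not.1 (this φ.not (Formula.realize_not.2 hn))) h
  · intro x
    have := hv _ (Or.inr ⟨x, rfl⟩)
    rw [Formula.realize_equal] at this
    exact this

end GeneralModelTheory

section ElementaryChain

variable {L : FirstOrder.Language.{0, 0}}

/-- Transition maps of an elementary chain. -/
theorem exists_chain_transition {G : ℕ → Type} [∀ n, L.Structure (G n)]
    (f : ∀ n, G n ↪ₑ[L] G (n + 1)) {S : Type} (e : ∀ n, G n → S)
    (he : ∀ n x, e (n + 1) (f n x) = e n x) {m n : ℕ} (h : m ≤ n) :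
    ∃ F : G m ↪ₑ[L] G n, ∀ x, e n (F x) = e m x := by
  induction h with
  | refl => exact ⟨ElementaryEmbedding.refl L _, fun _ => rfl⟩
  | step _ ih =>
    obtain ⟨F, hF⟩ := ih
    exact ⟨(f _).comp F, fun x => by simp [he, hF]⟩

/-- The **Tarski–Vaught chain theorem** for chains of length `ω`. -/
theorem realize_of_chain {G : ℕ → Type} [∀ n, L.Structure (G n)]
    (f : ∀ n, G n ↪ₑ[L] G (n + 1)) {S : Type} [L.Structure S] (e : ∀ n, G n ↪[L] S)
    (he : ∀ n x, e (n + 1) (f n x) = e n x) (hS : ∀ s, ∃ n x, e n x = s)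
    {α : Type} {k : ℕ} (φ : L.BoundedFormula α k) :
    ∀ (n : ℕ) (v : α → G n) (xs : Fin k → G n),
      φ.Realize (e n ∘ v) (e n ∘ xs) ↔ φ.Realize v xs := by
  induction φ with
  | falsum => exact fun _ _ _ => Iff.rfl
  | equal t₁ t₂ =>
    intro n v xs
    simp [BoundedFormula.Realize, ← Sum.comp_elim, HomClass.realize_term]
  | rel R ts =>
    intro n v xs
    simp only [BoundedFormula.Realize, ← Sum.comp_elim, HomClass.realize_term]
    exact (e n).map_rel R _
  | imp _ _ ih1 ih2 =>
    intro n v xs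
    simp [ih1, ih2]
  | all φ ih =>
    intro n v xs
    simp only [BoundedFormula.realize_all]
    refine ⟨fun h a => ?_, fun h s => ?_⟩
    · rw [← ih, Fin.comp_snoc]
      exact h (e n a)
    · obtain ⟨m, x, rfl⟩ := hS s
      obtain ⟨F, hF⟩ := exists_chain_transition f (fun n => e n) he (le_max_left n m)
      obtain ⟨F', hF'⟩ := exists_chain_transition f (fun n => e n) he (le_max_right n m)
      have h1 : φ.all.Realize (F ∘ v) (F ∘ xs) :=
        (F.map_boundedFormula φ.all v xs).2 h
      have h2 := (ih (max n m) (F ∘ v) (Fin.snoc (F ∘ xs) (F' x))).2 (h1 (F' x))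
      rw [Fin.comp_snoc, hF'] at h2
      have h3 : ∀ {β : Type} (w : β → G n), e (max n m) ∘ F ∘ w = e n ∘ w :=
        fun w => funext fun i => hF (w i)
      rwa [h3, h3] at h2

/-- A nonempty structure, bundled. -/
structure NonemptyStructure (L : FirstOrder.Language.{0, 0}) where
  /-- the underlying type -/
  carrier : Type
  [str : L.Structure carrier]
  [ne : Nonempty carrier]

attribute [instance] NonemptyStructure.str NonemptyStructure.ne

theorem NonemptyStructure.exists_next (X : NonemptyStructure L) :
    ∃ (Y : NonemptyStructure L) (E : X.carrier ↪ₑ[L] Y.carrier), RealizesTypesOver E := by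
  obtain ⟨N, i, j, E, hE⟩ := exists_realizesTypesOver (L := L) X.carrier
  exact ⟨⟨N⟩, E, hE⟩

/-- An elementary chain each of whose members realizes all types over the previous one. -/
noncomputable def NonemptyStructure.chain (X : NonemptyStructure L) : ℕ → NonemptyStructure L
  | 0 => X
  | n + 1 => (X.chain n).exists_next.choose

/-- Two presentations of a structure as the union of the same chain yield an automorphism. -/
theorem exists_equiv_of_chain {A : ℕ → Type} [∀ n, L.Structure (A n)]
    (t : ∀ n, A n ↪ₑ[L] A (n + 1)) {S : Type} [L.Structure S] (u w : ∀ n, A n ↪[L] S)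
    (hu : ∀ n x, u (n + 1) (t n x) = u n x) (hw : ∀ n x, w (n + 1) (t n x) = w n x)
    (hu' : ∀ s, ∃ n x, u n x = s) (hw' : ∀ s, ∃ n x, w n x = s) :
    ∃ g : S ≃[L] S, ∀ n x, g (u n x) = w n x := by
  have htrans : ∀ {m n : ℕ}, m ≤ n → ∃ F : A m ↪ₑ[L] A n,
      (∀ x, u n (F x) = u m x) ∧ ∀ x, w n (F x) = w m x := by
    intro m n h
    obtain ⟨F, hF⟩ := exists_chain_transition t (fun n x => (u n x, w n x))
      (fun n x => Prod.ext (hu n x) (hw n x)) h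
    exact ⟨F, fun x => congrArg Prod.fst (hF x), fun x => congrArg Prod.snd (hF x)⟩
  have hiff : ∀ m n x y, u m x = u n y ↔ w m x = w n y := by
    intro m n x y
    obtain ⟨F, hF, hF'⟩ := htrans (le_max_left m n)
    obtain ⟨F₂, hF₂, hF₂'⟩ := htrans (le_max_right m n)
    rw [← hF, ← hF₂, ← hF', ← hF₂', (u _).injective.eq_iff, (w _).injective.eq_iff]
  have hfin : ∀ (k : ℕ) (a : Fin k → S), ∃ n, ∃ a' : Fin k → A n, u n ∘ a' = a := by
    intro k a
    choose n x hx using fun i => hu' (a i)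
    obtain ⟨N, hN⟩ := (Set.finite_range n).bddAbove
    choose F hF using fun i => htrans (hN ⟨i, rfl⟩)
    exact ⟨N, fun i => F i (x i), funext fun i => by simp [hF, hx]⟩
  choose n x hx using hu'
  have hg : ∀ k y, w (n (u k y)) (x (u k y)) = w k y := fun k y => (hiff _ _ _ _).1 (hx _)
  have hbij : Function.Bijective fun s => w (n s) (x s) := by
    refine ⟨fun s s' h => ?_, fun s => ?_⟩
    · rw [← hx s, ← hx s']
      exact (hiff _ _ _ _).2 h
    · obtain ⟨k, y, rfl⟩ := hw' s
      exact ⟨u k y, hg k y⟩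
  refine ⟨⟨Equiv.ofBijective _ hbij, ?_, ?_⟩, hg⟩
  · intro k φ a
    obtain ⟨N, a', rfl⟩ := hfin k a
    have h1 : (Equiv.ofBijective _ hbij) ∘ u N ∘ a' = w N ∘ a' := funext fun i => hg N (a' i)
    change (Equiv.ofBijective _ hbij) _ = Structure.funMap φ ((Equiv.ofBijective _ hbij) ∘ _)
    rw [h1, ← (w N).map_fun, ← (u N).map_fun]
    exact hg _ _
  · intro k R a
    obtain ⟨N, a', rfl⟩ := hfin k a
    have h1 : (Equiv.ofBijective _ hbij) ∘ u N ∘ a' = w N ∘ a' := funext fun i => hg N (a' i)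
    change Structure.RelMap R ((Equiv.ofBijective _ hbij) ∘ _) ↔ _
    rw [h1, (w N).map_rel, (u N).map_rel]

/-- Every nonempty structure has an elementarily equivalent `ℵ₀`-saturated, strongly
`ℵ₀`-homogeneous companion. -/
theorem exists_saturated_homogeneous (M : Type) [L.Structure M] [Nonempty M] :
    ∃ (S : Type) (_ : L.Structure S), (S ≅[L] M) ∧
      (∀ (m : ℕ) (a : Fin m → S) (p : Set (L.Formula (Unit ⊕ Fin m))),
        (∀ q : Finset (L.Formula (Unit ⊕ Fin m)), ↑q ⊆ p →
          ∃ x : S, ∀ φ ∈ q, φ.Realize (Sum.elim (fun _ => x) a)) →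
        ∃ x : S, ∀ φ ∈ p, φ.Realize (Sum.elim (fun _ => x) a)) ∧
      (∀ (m : ℕ) (a b : Fin m → S), (∀ φ : L.Formula (Fin m), φ.Realize a ↔ φ.Realize b) →
        ∃ g : S ≃[L] S, ∀ i, g (a i) = b i) := by
  let X : NonemptyStructure L := ⟨M⟩
  let G : ℕ → Type := fun n => (X.chain n).carrier
  let f : ∀ n, G n ↪ₑ[L] G (n + 1) := fun n => (X.chain n).exists_next.choose_spec.choose
  have hf : ∀ n, RealizesTypesOver (f n) :=
    fun n => (X.chain n).exists_next.choose_spec.choose_spec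
  let f' : ∀ n, G n ↪[L] G (n + 1) := fun n => (f n).toEmbedding
  let F : ∀ i j, i ≤ j → G i ↪[L] G j := DirectedSystem.natLERec f'
  let S := FirstOrder.Language.DirectLimit G F
  let e : ∀ n, G n ↪[L] S := fun n => FirstOrder.Language.DirectLimit.of L ℕ G F n
  have he : ∀ n x, e (n + 1) (f n x) = e n x := by
    intro n x
    have := FirstOrder.Language.DirectLimit.of_f (L := L) (G := G) (f := F) (hij := Nat.le_succ n) (x := x)
    rw [← this]
    congr 1
    simp only [F, DirectedSystem.coe_natLERec]
    rw [Nat.leRecOn_succ' (C := G)]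
    rfl
  have hS : ∀ s : S, ∃ n x, e n x = s := FirstOrder.Language.DirectLimit.exists_of
  have hel : ∀ {α : Type} (φ : L.Formula α) (n : ℕ) (v : α → G n),
      φ.Realize (e n ∘ v) ↔ φ.Realize v := by
    intro α φ n v
    have := realize_of_chain f e he hS φ n v default
    rwa [Unique.eq_default (e n ∘ default)] at this
  have htrans := fun {m n : ℕ} (h : m ≤ n) =>
    exists_chain_transition f (fun n => e n) he h
  have hfin : ∀ (m : ℕ) (a : Fin m → S), ∃ n, ∃ a' : Fin m → G n, e n ∘ a' = a := by
    intro m a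
    choose n x hx using fun i => hS (a i)
    obtain ⟨N, hN⟩ := (Set.finite_range n).bddAbove
    choose F hF using fun i => htrans (hN ⟨i, rfl⟩)
    exact ⟨N, fun i => F i (x i), funext fun i => by simp [hF, hx]⟩
  refine ⟨S, inferInstance, ?_, ?_, ?_⟩
  · rw [elementarilyEquivalent_iff]
    intro φ
    have := hel φ 0 default
    rwa [Unique.eq_default (e 0 ∘ default)] at this
  · intro m a p hp
    classical
    obtain ⟨n, a', rfl⟩ := hfin m a
    let m₀ : G n := Classical.arbitrary _
    let r : Unit ⊕ Fin m → G n ⊕ G n := Sum.elim (fun _ => Sum.inr m₀) (fun i => Sum.inl (a' i))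
    obtain ⟨v, hv⟩ := hf n ((fun φ => φ.relabel r) '' p) (by
      intro q hq
      obtain ⟨q', hq', rfl⟩ := Finset.subset_set_image_iff.1 hq
      obtain ⟨x, hx⟩ := hp q' hq'
      let χ : L.Formula (Fin m) := Formula.iExs Unit
        ((Formula.iInf (fun ψ : q' => (ψ : L.Formula (Unit ⊕ Fin m)))).relabel Sum.swap)
      have hχ : χ.Realize (e n ∘ a') := by
        simp only [χ, Formula.realize_iExs, Formula.realize_relabel, Formula.realize_iInf]
        refine ⟨fun _ => x, fun ψ => ?_⟩
        convert hx ψ ψ.2 using 1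
        ext (i | i) <;> rfl
      rw [hel] at hχ
      simp only [χ, Formula.realize_iExs, Formula.realize_relabel, Formula.realize_iInf] at hχ
      obtain ⟨y, hy⟩ := hχ
      refine ⟨fun _ => y (), fun φ hφ => ?_⟩
      obtain ⟨ψ, hψ, rfl⟩ := Finset.mem_image.1 hφ
      rw [Formula.realize_relabel]
      convert hy ⟨ψ, hψ⟩ using 1
      ext (i | i) <;> rfl)
    refine ⟨e (n + 1) (v m₀), fun φ hφ => ?_⟩
    have := hv _ ⟨φ, hφ, rfl⟩
    rw [Formula.realize_relabel, ← hel] at this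
    convert this using 1
    ext (i | i)
    · rfl
    · exact (he n _).symm
  · intro m a b hab
    obtain ⟨n, ab, hn⟩ := hfin (m + m) (Fin.append a b)
    obtain ⟨a', rfl⟩ : ∃ a' : Fin m → G n, e n ∘ a' = a :=
      ⟨fun i => ab (Fin.castAdd m i), funext fun i => by
        exact (congrFun hn (Fin.castAdd m i)).trans (Fin.append_left _ _ _)⟩
    obtain ⟨b', rfl⟩ : ∃ b' : Fin m → G n, e n ∘ b' = b :=
      ⟨fun i => ab (Fin.natAdd m i), funext fun i => by
        exact (congrFun hn (Fin.natAdd m i)).trans (Fin.append_right _ _ _)⟩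
    simp only [hel] at hab
    obtain ⟨h₀, hh₀⟩ := (hf n).exists_extension a' b' hab
    have step : ∀ (k : ℕ) (h : G k ↪ₑ[L] G (k + 1)), ∃ h' : G (k + 1) ↪ₑ[L] G (k + 2),
        ∀ x, h' (h x) = f (k + 1) (f k x) := fun k h =>
      (hf (k + 1)).exists_extension h (f k) fun φ =>
        (h.map_formula φ id).trans ((f k).map_formula φ id).symm
    choose next hnext using step
    let H : ∀ k, G (n + k) ↪ₑ[L] G (n + k + 1) := fun k =>
      Nat.rec (motive := fun k => G (n + k) ↪ₑ[L] G (n + k + 1)) h₀ (fun k h => next (n + k) h) k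
    have hH : ∀ k x, H (k + 1) (H k x) = f (n + k + 1) (f (n + k) x) :=
      fun k x => hnext (n + k) (H k) x
    have hcomp : ∀ k x, H (k + 2) (f (n + k + 1) (f (n + k) x)) =
        f (n + k + 2) (f (n + k + 1) (H k x)) := by
      intro k x
      rw [← hH k, ← hH (k + 1)]
    obtain ⟨g, hg⟩ := exists_equiv_of_chain (A := fun k => G (n + 2 * k))
      (fun k => (f (n + 2 * k + 1)).comp (f (n + 2 * k))) (fun k => e (n + 2 * k))
      (fun k => (e (n + 2 * k + 1)).comp (H (2 * k)).toEmbedding)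
      (fun k x => (he (n + 2 * k + 1) _).trans (he _ _))
      (fun k x => (congrArg (e (n + 2 * k + 2 + 1)) (hcomp (2 * k) x)).trans
        ((he (n + 2 * k + 2) _).trans (he (n + 2 * k + 1) _)))
      (fun s => by
        obtain ⟨k, x, rfl⟩ := hS s
        obtain ⟨F, hF⟩ := htrans (show k ≤ n + 2 * k by omega)
        exact ⟨k, F x, hF x⟩)
      (fun s => by
        obtain ⟨k, x, rfl⟩ := hS s
        obtain ⟨F, hF⟩ := htrans (show k ≤ n + 2 * k + 1 by omega)
        refine ⟨k + 1, H (2 * k + 1) (F x), ?_⟩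
        refine (congrArg (e (n + 2 * k + 2 + 1)) (hH (2 * k + 1) (F x))).trans ?_
        exact (he (n + 2 * k + 2) _).trans ((he (n + 2 * k + 1) _).trans (hF x)))
    refine ⟨g, fun i => (hg 0 (a' i)).trans ?_⟩
    exact (congrArg (e (n + 1)) (hh₀ i)).trans (he n _)

end ElementaryChain

section OmittingTypes

variable {L : FirstOrder.Language.{0, 0}}

/-- A finitely satisfiable set of formulas is realized in an elementarily equivalent structure. -/
theorem exists_realize_of_finitely_satisfiable (M : Type) [L.Structure M] [Nonempty M]
    {α : Type} (Γ : Set (L.Formula α))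
    (hΓ : ∀ q : Finset (L.Formula α), ↑q ⊆ Γ → ∃ v : α → M, ∀ φ ∈ q, φ.Realize v) :
    ∃ (N : Type) (_ : L.Structure N), (N ≅[L] M) ∧ ∃ v : α → N, ∀ φ ∈ Γ, φ.Realize v := by
  classical
  let I := Finset (L.Formula α)
  let U : Ultrafilter I := Ultrafilter.of Filter.atTop
  have hU : (U : Filter I) ≤ Filter.atTop := Ultrafilter.of_le _
  choose w hw using fun i : I => hΓ (i.filter (· ∈ Γ)) (by intro φ; simp)
  refine ⟨(U : Filter I).Product (fun _ => M), inferInstance, ?_,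
    fun m => ((fun i => w i m : I → M) : (U : Filter I).Product fun _ => M), fun φ hφ => ?_⟩
  · rw [elementarilyEquivalent_iff]
    intro φ
    rw [Ultraproduct.sentence_realize]
    simp
  · refine (Ultraproduct.realize_formula_cast (u := U) (M := fun _ : I => M) φ
      (fun m i => w i m)).2 ?_
    refine hU ((Filter.eventually_ge_atTop ({φ} : I)).mono fun i hi => ?_)
    exact hw i φ (by simpa [hφ] using Finset.singleton_subset_iff.1 hi)

theorem realize_congr_of_eqOn_freeVarFinset {M α : Type} [L.Structure M] [DecidableEq α]
    (φ : L.Formula α) {v w : α → M} (h : ∀ a ∈ φ.freeVarFinset, v a = w a) :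
    φ.Realize v ↔ φ.Realize w := by
  have h1 : (BoundedFormula.restrictFreeVar φ Subtype.val).Realize v default ↔ φ.Realize v :=
    BoundedFormula.realize_restrictFreeVar _ fun _ => rfl
  exact h1.symm.trans (BoundedFormula.realize_restrictFreeVar _ fun a => h a a.2)

/-- The forcing conditions for constructing a countable model: formulas satisfiable in `C`. -/
def SatisfiableFormula (L : FirstOrder.Language.{0, 0}) (C : Type) [L.Structure C] : Type :=
  {φ : L.Formula ℕ // ∃ v : ℕ → C, φ.Realize v}

instance (C : Type) [L.Structure C] : Preorder (SatisfiableFormula L C) where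
  le φ ψ := ∀ v : ℕ → C, ψ.1.Realize v → φ.1.Realize v
  le_refl _ _ := id
  le_trans _ _ _ h₁ h₂ v h := h₁ v (h₂ v h)

/-- The **omitting types theorem** for a single type in finitely many variables. -/
theorem exists_countable_omitting [L.IsRelational] [Countable L.Symbols] (C : Type)
    [L.Structure C] [Nonempty C] {n : ℕ} (p : Set (L.Formula (Fin n)))
    (hp : ∀ χ : L.Formula (Fin n), (∃ v : Fin n → C, χ.Realize v) →
      ∃ θ ∉ p, ∃ v : Fin n → C, χ.Realize v ∧ θ.Realize v) :
    ∃ (N : Type) (_ : L.Structure N), Countable N ∧ (N ≅[L] C) ∧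
      ∀ w : Fin n → N, ∃ θ ∉ p, θ.Realize w := by
  classical
  have hex : ∀ (m : ℕ) (φ : L.Formula (Fin (m + 1))), ∃ ψ : L.Formula (Fin m),
      ∀ (N : Type) [L.Structure N] [Nonempty N] (u : Fin m → N),
        ψ.Realize u ↔ ∃ y : N, φ.Realize (Fin.snoc u y : Fin (m + 1) → N) := by
    intro m φ
    obtain ⟨ψ, hψ⟩ := exists_formula_realize_iff_exists
      (φ.relabel (Fin.snoc Sum.inl (Sum.inr ()) : Fin (m + 1) → Fin m ⊕ Unit))
    refine ⟨ψ, fun N _ _ u => ?_⟩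
    have key : ∀ w : Unit → N, (Sum.elim u w) ∘
        (Fin.snoc Sum.inl (Sum.inr ()) : Fin (m + 1) → Fin m ⊕ Unit) =
        (Fin.snoc u (w ()) : Fin (m + 1) → N) := by
      intro w
      ext i
      refine Fin.lastCases ?_ (fun i => ?_) i <;> simp
    rw [hψ]
    simp only [Formula.realize_relabel, key]
    exact ⟨fun ⟨w, hw⟩ => ⟨w (), hw⟩, fun ⟨y, hy⟩ => ⟨fun _ => y, hy⟩⟩
  choose ex hex using hex
  let J := (Fin n → ℕ) ⊕ (Σ m : ℕ, L.Formula (Fin (m + 1)) × (Fin m → ℕ))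
  let henkin : ∀ m : ℕ, L.Formula (Fin (m + 1)) → (Fin m → ℕ) → ℕ → L.Formula ℕ :=
    fun m φ x j => ((ex m φ).relabel x).imp (φ.relabel (Fin.snoc x j : Fin (m + 1) → ℕ))
  let D : J → Order.Cofinal (SatisfiableFormula L C) := fun j =>
    match j with
    | Sum.inl s =>
      { carrier := {φ | ∃ θ ∉ p, ∀ v : ℕ → C, φ.1.Realize v → (θ.relabel s).Realize v}
        isCofinal := by
          intro φ
          obtain ⟨χ, hχ⟩ := exists_formula_realize_iff_exists
            ((φ.1.relabel Sum.inr : L.Formula (Fin n ⊕ ℕ)) ⊓ Formula.iInf (fun k : Fin n =>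
              Term.equal (Term.var (Sum.inl k)) (Term.var (Sum.inr (s k)))))
          simp only [Formula.realize_inf, Formula.realize_relabel, Formula.realize_iInf,
            Formula.realize_equal, Term.realize_var, Sum.elim_comp_inr, Sum.elim_inl,
            Sum.elim_inr] at hχ
          obtain ⟨v, hv⟩ := φ.2
          obtain ⟨θ, hθ, u, hu, hu'⟩ := hp χ ⟨v ∘ s, (hχ _ _).2 ⟨v, hv, fun _ => rfl⟩⟩
          obtain ⟨w, hw, hw'⟩ := (hχ _ _).1 hu
          refine ⟨⟨φ.1 ⊓ θ.relabel s, w, ?_⟩, ⟨θ, hθ, fun v hv => (Formula.realize_inf.1 hv).2⟩,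
            fun v hv => (Formula.realize_inf.1 hv).1⟩
          refine Formula.realize_inf.2 ⟨hw, ?_⟩
          rw [Formula.realize_relabel]
          convert hu' using 1
          exact funext fun i => (hw' i).symm }
    | Sum.inr ⟨m, φ, x⟩ =>
      { carrier := {ψ | ∃ j, ∀ v : ℕ → C, ψ.1.Realize v → (henkin m φ x j).Realize v}
        isCofinal := by
          intro ψ
          obtain ⟨v, hv⟩ := ψ.2
          obtain ⟨j, hj⟩ := Infinite.exists_notMem_finset
            (ψ.1.freeVarFinset ∪ Finset.univ.image x)
          simp only [Finset.mem_union, Finset.mem_image, Finset.mem_univ, true_and, not_or,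
            not_exists] at hj
          suffices h : ∃ w : ℕ → C, ψ.1.Realize w ∧ (henkin m φ x j).Realize w by
            obtain ⟨w, hw, hw'⟩ := h
            exact ⟨⟨ψ.1 ⊓ henkin m φ x j, w, Formula.realize_inf.2 ⟨hw, hw'⟩⟩,
              ⟨j, fun v hv => (Formula.realize_inf.1 hv).2⟩,
              fun v hv => (Formula.realize_inf.1 hv).1⟩
          by_cases h : (ex m φ).Realize (v ∘ x)
          · obtain ⟨y, hy⟩ := (hex m φ C _).1 h
            refine ⟨Function.update v j y, ?_, ?_⟩
            · refine (realize_congr_of_eqOn_freeVarFinset _ fun a ha => ?_).1 hv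
              rw [Function.update_of_ne]
              rintro rfl
              exact hj.1 ha
            · simp only [henkin, Formula.realize_imp, Formula.realize_relabel]
              intro _
              convert hy using 1
              ext i
              refine Fin.lastCases ?_ (fun i => ?_) i
              · simp
              · simp [Function.update_of_ne (hj.2 i)]
          · refine ⟨v, hv, ?_⟩
            simp only [henkin, Formula.realize_imp, Formula.realize_relabel]
            exact fun h' => absurd h' h }
  let _ : Encodable J := Encodable.ofCountable _
  let p₀ : SatisfiableFormula L C := ⟨⊤, fun _ => Classical.arbitrary C, by simp⟩
  let q := Order.sequenceOfCofinals p₀ D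
  have hq : Monotone q := Order.sequenceOfCofinals.monotone p₀ D
  have hqD : ∀ j, ∃ k, q k ∈ D j := fun j => ⟨_, Order.sequenceOfCofinals.encode_mem p₀ D j⟩
  obtain ⟨N, _, hNC, a, ha⟩ := exists_realize_of_finitely_satisfiable C
    {φ : L.Formula ℕ | ∃ k, ∀ v : ℕ → C, (q k).1.Realize v → φ.Realize v} (by
      intro t ht
      choose! k hk using ht
      obtain ⟨v, hv⟩ := (q (t.sup k)).2
      exact ⟨v, fun φ hφ => hk hφ v (hq (Finset.le_sup hφ) v hv)⟩)
  have : Nonempty N := ⟨a 0⟩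
  let N' : L.Substructure N :=
    { carrier := Set.range a
      fun_mem := fun f => isEmptyElim f }
  have hN' : N'.IsElementary := by
    refine N'.isElementary_of_exists fun m φ x y hy => ?_
    choose x' hx' using fun i => (x i).2
    let φ' : L.Formula (Fin (m + 1)) := φ.toFormula.relabel (Sum.elim isEmptyElim id)
    have hφ' : ∀ w : Fin (m + 1) → N, φ'.Realize w ↔ φ.Realize default w := by
      intro w
      simp only [φ', Formula.realize_relabel, BoundedFormula.realize_toFormula]
      rw [Unique.eq_default ((w ∘ Sum.elim isEmptyElim id) ∘ Sum.inl)]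
      rfl
    obtain ⟨k, j, hj⟩ := hqD (Sum.inr ⟨m, φ', x'⟩)
    have h1 := ha _ ⟨k, hj⟩
    simp only [henkin, Formula.realize_imp, Formula.realize_relabel] at h1
    have hax : a ∘ x' = (↑) ∘ x := funext fun i => hx' i
    rw [hax] at h1
    have h2 := h1 ((hex m φ' N _).2 ⟨y, (hφ' _).2 hy⟩)
    refine ⟨⟨a j, j, rfl⟩, ?_⟩
    rw [← hφ']
    convert h2 using 1
    ext i
    refine Fin.lastCases ?_ (fun i => ?_) i
    · simp
    · simp [hx']
  let N'' : L.ElementarySubstructure N := ⟨N', hN'⟩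
  refine ⟨N'', inferInstance, ?_, ?_, ?_⟩
  · exact (Set.countable_range a).to_subtype
  · exact (N''.elementarilyEquivalent).trans hNC
  · intro w
    choose s hs using fun i => (w i).2
    obtain ⟨k, θ, hθ, hk⟩ := hqD (Sum.inl s)
    refine ⟨θ, hθ, ?_⟩
    have h1 := ha _ ⟨k, hk⟩
    rw [Formula.realize_relabel] at h1
    rw [← N''.subtype.map_formula]
    convert h1 using 1
    exact funext fun i => (hs i).symm

/-- If all countable models of the theory of `C` are isomorphic, then only finitely many
types of `n`-tuples are realized in `C`. -/
theorem finite_range_type_of_categorical [L.IsRelational] [Countable L.Symbols] (C : Type)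
    [L.Structure C] (n : ℕ)
    (hcat : ∀ (N₁ N₂ : Type) [L.Structure N₁] [L.Structure N₂], Countable N₁ → Countable N₂ →
      (N₁ ≅[L] C) → (N₂ ≅[L] C) → Nonempty (N₁ ≃[L] N₂)) :
    (Set.range fun v : Fin n → C => {φ : L.Formula (Fin n) | φ.Realize v}).Finite := by
  classical
  by_contra hinf
  have hCinf : Infinite C := by
    by_contra h
    rw [not_infinite_iff_finite] at h
    exact hinf (Set.finite_range _)
  let IsAtom : L.Formula (Fin n) → Prop := fun χ => ∀ θ : L.Formula (Fin n),
    (∀ v : Fin n → C, χ.Realize v → θ.Realize v) ∨ ∀ v : Fin n → C, χ.Realize v → ¬ θ.Realize v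
  obtain ⟨N, _, hNC, w, hw⟩ := exists_realize_of_finitely_satisfiable C
    {φ : L.Formula (Fin n) | ∃ χ, IsAtom χ ∧ φ = χ.not} (by
      intro q hq
      have hq' : ∀ φ, φ ∈ q → ∃ χ, IsAtom χ ∧ φ = χ.not := fun φ h => hq h
      choose! χ hχ hχ' using hq'
      by_contra! hcon
      refine hinf ((q.finite_toSet.image fun φ =>
        {θ : L.Formula (Fin n) | ∀ v : Fin n → C, (χ φ).Realize v → θ.Realize v}).subset ?_)
      rintro _ ⟨v, rfl⟩
      obtain ⟨φ, hφ, hφv⟩ := hcon v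
      have hv : (χ φ).Realize v := by
        rw [hχ' φ hφ, Formula.realize_not, not_not] at hφv
        exact hφv
      refine ⟨φ, hφ, ?_⟩
      ext θ
      refine ⟨fun h => h v hv, fun h => ?_⟩
      exact (hχ φ hφ θ).resolve_right fun h' => h' v hv h)
  have hNinf : Infinite N := hNC.infinite_iff.2 hCinf
  let p : Set (L.Formula (Fin n)) := {φ | φ.Realize w}
  obtain ⟨N₂, _, hN₂, hN₂C, homit⟩ := exists_countable_omitting C p (by
    rintro χ ⟨v, hv⟩
    by_contra! hcon
    have hat : IsAtom χ := by
      intro θ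
      by_cases h : θ ∈ p
      · refine Or.inl fun v hv => ?_
        have := hcon θ.not (by simpa [p] using h) v hv
        simpa using this
      · exact Or.inr fun v hv => hcon θ h v hv
    have h1 : χ ∉ p := Formula.realize_not.1 (hw _ ⟨χ, hat, rfl⟩)
    exact hcon χ h1 v hv hv)
  obtain ⟨N₁, hwN₁, hN₁⟩ := exists_elementarySubstructure_card_eq L (Set.range w) Cardinal.aleph0.{0}
    le_rfl (by simp)
    (by simpa [FirstOrder.Language.card] using Cardinal.mk_le_aleph0 (α := L.Symbols))
    (by simp [Cardinal.infinite_iff.1 hNinf])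
  have hN₁c : Countable N₁ := by
    rw [← Cardinal.mk_le_aleph0_iff]
    simpa using hN₁.le
  obtain ⟨g⟩ := hcat N₁ N₂ hN₁c hN₂ (N₁.elementarilyEquivalent.trans hNC) hN₂C
  let w' : Fin n → N₁ := fun i => ⟨w i, hwN₁ ⟨i, rfl⟩⟩
  obtain ⟨θ, hθ, hθw⟩ := homit (g ∘ w')
  apply hθ
  rw [StrongHomClass.realize_formula] at hθw
  exact (N₁.subtype.map_formula θ w').2 hθw

end OmittingTypes

section RankedTypes

variable {ι : Type}

/-- The possible types of quantifier rank at most `k` of colored linear orders. -/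
def RankedType (ι : Type) : ℕ → Type
  | 0 => Unit
  | k + 1 => Set (Set ι × RankedType ι k × RankedType ι k)

instance RankedType.instFinite [Finite ι] : ∀ k, Finite (RankedType ι k)
  | 0 => inferInstanceAs (Finite Unit)
  | k + 1 =>
    have := RankedType.instFinite k
    inferInstanceAs (Finite (Set (Set ι × RankedType ι k × RankedType ι k)))

/-- Forget the last round of a ranked type. -/
def RankedType.trunc : ∀ k, RankedType ι (k + 1) → RankedType ι k
  | 0, _ => ()
  | k + 1, σ => (fun p : Set ι × RankedType ι (k + 1) × RankedType ι (k + 1) =>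
      (p.1, RankedType.trunc k p.2.1, RankedType.trunc k p.2.2)) '' σ

/-- The ranked type of an ordered sum. -/
def RankedType.add : ∀ k, RankedType ι k → RankedType ι k → RankedType ι k
  | 0, _, _ => ()
  | k + 1, σ, τ =>
    ((fun p : Set ι × RankedType ι k × RankedType ι k =>
      (p.1, p.2.1, RankedType.add k p.2.2 (RankedType.trunc k τ))) '' σ ∪
    (fun p : Set ι × RankedType ι k × RankedType ι k =>
      (p.1, RankedType.add k (RankedType.trunc k σ) p.2.1, p.2.2)) '' τ :
      Set (Set ι × RankedType ι k × RankedType ι k))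

/-- The ranked type of the empty order. -/
def RankedType.empty : ∀ k, RankedType ι k
  | 0 => ()
  | k + 1 => (∅ : Set (Set ι × RankedType ι k × RankedType ι k))

/-- The ranked type of a one-point order of color `γ`. -/
def RankedType.point (γ : Set ι) : ∀ k, RankedType ι k
  | 0 => ()
  | k + 1 => ({(γ, RankedType.empty k, RankedType.empty k)} :
      Set (Set ι × RankedType ι k × RankedType ι k))

variable {M N : Type} [LinearOrder M] [LinearOrder N] (c : ι → Set M) (d : ι → Set N)

/-- The set of colors of a point. -/
def colorSet {M : Type} (c : ι → Set M) (x : M) : Set ι := {i | x ∈ c i}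

/-- The ranked type of a subset of a colored linear order. -/
def rankedType : ∀ k, Set M → RankedType ι k
  | 0, _ => ()
  | k + 1, s => ((fun x => (colorSet c x, rankedType k (s ∩ Iio x), rankedType k (s ∩ Ioi x))) '' s :
      Set (Set ι × RankedType ι k × RankedType ι k))

theorem rankedType_succ (k : ℕ) (s : Set M) : rankedType c (k + 1) s =
    ((fun x => (colorSet c x, rankedType c k (s ∩ Iio x), rankedType c k (s ∩ Ioi x))) '' s :
      Set (Set ι × RankedType ι k × RankedType ι k)) := rfl

theorem rankedType_succ_eq_iff (k : ℕ) (s : Set M) (t : Set N) :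
    rankedType c (k + 1) s = rankedType d (k + 1) t ↔
      (∀ x ∈ s, ∃ y ∈ t, colorSet c x = colorSet d y ∧
        rankedType c k (s ∩ Iio x) = rankedType d k (t ∩ Iio y) ∧
        rankedType c k (s ∩ Ioi x) = rankedType d k (t ∩ Ioi y)) ∧
      ∀ y ∈ t, ∃ x ∈ s, colorSet c x = colorSet d y ∧
        rankedType c k (s ∩ Iio x) = rankedType d k (t ∩ Iio y) ∧
        rankedType c k (s ∩ Ioi x) = rankedType d k (t ∩ Ioi y) := by
  rw [rankedType_succ, rankedType_succ]
  refine Subset.antisymm_iff.trans (and_congr ?_ ?_)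
  · refine image_subset_iff.trans (forall₂_congr fun x _ => ?_)
    simp only [mem_preimage, mem_image, Prod.mk.injEq, eq_comm]
  · refine image_subset_iff.trans (forall₂_congr fun x _ => ?_)
    simp only [mem_preimage, mem_image, Prod.mk.injEq]

theorem trunc_rankedType (k : ℕ) (s : Set M) :
    RankedType.trunc k (rankedType c (k + 1) s) = rankedType c k s := by
  induction k generalizing s with
  | zero => rfl
  | succ k ih =>
    rw [rankedType_succ, rankedType_succ]
    refine (image_image _ _ _).trans ?_
    simp only [ih]

theorem rankedType_eq_of_succ {k : ℕ} {s : Set M} {t : Set N}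
    (h : rankedType c (k + 1) s = rankedType d (k + 1) t) :
    rankedType c k s = rankedType d k t := by
  rw [← trunc_rankedType, h, trunc_rankedType]

theorem rankedType_eq_of_le {k l : ℕ} (hkl : k ≤ l) {s : Set M} {t : Set N}
    (h : rankedType c l s = rankedType d l t) : rankedType c k s = rankedType d k t := by
  induction hkl with
  | refl => exact h
  | step _ ih => exact ih (rankedType_eq_of_succ c d h)

theorem rankedType_union (k : ℕ) {s t : Set M} (hst : ∀ x ∈ s, ∀ y ∈ t, x < y) :
    rankedType c k (s ∪ t) = RankedType.add k (rankedType c k s) (rankedType c k t) := by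
  induction k generalizing s t with
  | zero => rfl
  | succ k ih =>
    rw [rankedType_succ, image_union, RankedType.add, trunc_rankedType, trunc_rankedType]
    congr 1
    · refine Eq.trans ?_ (image_image _ _ _).symm
      refine image_congr fun x hx => ?_
      have h1 : (s ∪ t) ∩ Iio x = s ∩ Iio x := by
        ext z
        simp only [mem_inter_iff, mem_union, mem_Iio]
        exact ⟨fun h => ⟨h.1.resolve_right fun hz => (h.2.trans (hst x hx z hz)).false, h.2⟩,
          fun h => ⟨Or.inl h.1, h.2⟩⟩
      have h2 : (s ∪ t) ∩ Ioi x = (s ∩ Ioi x) ∪ t := by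
        ext z
        simp only [mem_inter_iff, mem_union, mem_Ioi]
        exact ⟨fun h => h.1.imp_left fun hz => ⟨hz, h.2⟩, fun h => h.elim
          (fun hz => ⟨Or.inl hz.1, hz.2⟩) fun hz => ⟨Or.inr hz, hst x hx z hz⟩⟩
      simp only [h1, h2]
      rw [ih fun z hz y hy => hst z hz.1 y hy]
    · refine Eq.trans ?_ (image_image _ _ _).symm
      refine image_congr fun x hx => ?_
      have h1 : (s ∪ t) ∩ Iio x = s ∪ (t ∩ Iio x) := by
        ext z
        simp only [mem_inter_iff, mem_union, mem_Iio]
        exact ⟨fun h => h.1.imp_right fun hz => ⟨hz, h.2⟩, fun h => h.elim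
          (fun hz => ⟨Or.inl hz, hst z hz x hx⟩) fun hz => ⟨Or.inr hz.1, hz.2⟩⟩
      have h2 : (s ∪ t) ∩ Ioi x = t ∩ Ioi x := by
        ext z
        simp only [mem_inter_iff, mem_union, mem_Ioi]
        exact ⟨fun h => ⟨h.1.resolve_left fun hz => (h.2.trans (hst z hz x hx)).false, h.2⟩,
          fun h => ⟨Or.inr h.1, h.2⟩⟩
      simp only [h1, h2]
      rw [ih fun z hz y hy => hst z hz y hy.1]

theorem rankedType_empty (k : ℕ) : rankedType c k ∅ = RankedType.empty k := by
  cases k with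
  | zero => rfl
  | succ k => exact image_empty _

theorem rankedType_singleton (k : ℕ) (x : M) :
    rankedType c k {x} = RankedType.point (colorSet c x) k := by
  cases k with
  | zero => rfl
  | succ k =>
    rw [rankedType_succ, image_singleton]
    have h1 : ({x} : Set M) ∩ Iio x = ∅ := by simp
    have h2 : ({x} : Set M) ∩ Ioi x = ∅ := by simp
    rw [h1, h2, rankedType_empty]
    rfl

/-- The ranked type of a set is determined by a point and the two sides of it. -/
theorem rankedType_split (k : ℕ) {s : Set M} {x : M} (hx : x ∈ s) :
    rankedType c k s = RankedType.add k (rankedType c k (s ∩ Iio x))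
      (RankedType.add k (RankedType.point (colorSet c x) k) (rankedType c k (s ∩ Ioi x))) := by
  rw [← rankedType_singleton, ← rankedType_union, ← rankedType_union]
  · congr 1
    ext z
    simp only [mem_union, mem_inter_iff, mem_Iio, mem_singleton_iff, mem_Ioi]
    rcases lt_trichotomy z x with h | rfl | h
    · simp [h, h.ne, h.not_gt]
    · simp [hx]
    · simp [h, h.ne', h.not_gt]
  · rintro z hz y (rfl | hy)
    · exact hz.2
    · exact lt_trans hz.2 hy.2
  · rintro z rfl y hy
    exact hy.2

theorem rankedType_image {f : M → N} (hf : StrictMono f)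
    (hc : ∀ x, colorSet d (f x) = colorSet c x) (k : ℕ) (s : Set M) :
    rankedType d k (f '' s) = rankedType c k s := by
  induction k generalizing s with
  | zero => rfl
  | succ k ih =>
    rw [rankedType_succ, rankedType_succ, image_image]
    refine image_congr fun x _ => ?_
    have h1 : f '' s ∩ Iio (f x) = f '' (s ∩ Iio x) := by
      ext z
      constructor
      · rintro ⟨⟨y, hy, rfl⟩, h⟩
        exact ⟨y, ⟨hy, hf.lt_iff_lt.1 h⟩, rfl⟩
      · rintro ⟨y, hy, rfl⟩
        exact ⟨⟨y, hy.1, rfl⟩, hf hy.2⟩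
    have h2 : f '' s ∩ Ioi (f x) = f '' (s ∩ Ioi x) := by
      ext z
      constructor
      · rintro ⟨⟨y, hy, rfl⟩, h⟩
        exact ⟨y, ⟨hy, hf.lt_iff_lt.1 h⟩, rfl⟩
      · rintro ⟨y, hy, rfl⟩
        exact ⟨⟨y, hy.1, rfl⟩, hf hy.2⟩
    rw [h1, h2, ih, ih, hc]

/-- The sequence of all ranked types of a set. -/
def fullType (s : Set M) : ∀ k, RankedType ι k := fun k => rankedType c k s

theorem fullType_union {s t : Set M} (hst : ∀ x ∈ s, ∀ y ∈ t, x < y) :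
    fullType c (s ∪ t) = fun k => RankedType.add k (fullType c s k) (fullType c t k) :=
  funext fun k => rankedType_union c k hst

/-- If rank `K` types determine rank `K + 1` types on a class of sets closed under cutting at
points, then rank `K` types determine full types. -/
theorem fullType_eq_of_rankedType_eq {𝓢 : Set (Set M)}
    (hl : ∀ s ∈ 𝓢, ∀ x ∈ s, s ∩ Iio x ∈ 𝓢) (hr : ∀ s ∈ 𝓢, ∀ x ∈ s, s ∩ Ioi x ∈ 𝓢) {K : ℕ}
    (hK : ∀ s ∈ 𝓢, ∀ t ∈ 𝓢, rankedType c K s = rankedType c K t →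
      rankedType c (K + 1) s = rankedType c (K + 1) t)
    {s t : Set M} (hs : s ∈ 𝓢) (ht : t ∈ 𝓢) (h : rankedType c K s = rankedType c K t) :
    fullType c s = fullType c t := by
  have key : ∀ j, ∀ s ∈ 𝓢, ∀ t ∈ 𝓢, rankedType c K s = rankedType c K t →
      rankedType c (K + j) s = rankedType c (K + j) t := by
    intro j
    induction j with
    | zero => exact fun _ _ _ _ h => h
    | succ j ih =>
      intro s hs t ht h
      obtain ⟨h1, h2⟩ := (rankedType_succ_eq_iff c c K s t).1 (hK s hs t ht h)
      refine (rankedType_succ_eq_iff c c (K + j) s t).2 ⟨fun x hx => ?_, fun y hy => ?_⟩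
      · obtain ⟨y, hy, hc, hlo, hhi⟩ := h1 x hx
        exact ⟨y, hy, hc, ih _ (hl s hs x hx) _ (hl t ht y hy) hlo,
          ih _ (hr s hs x hx) _ (hr t ht y hy) hhi⟩
      · obtain ⟨x, hx, hc, hlo, hhi⟩ := h2 y hy
        exact ⟨x, hx, hc, ih _ (hl s hs x hx) _ (hl t ht y hy) hlo,
          ih _ (hr s hs x hx) _ (hr t ht y hy) hhi⟩
  exact funext fun k => rankedType_eq_of_le c c (Nat.le_add_left k K) (key k s hs t ht h)

theorem exists_rank_of_finite_fullType {𝓢 : Set (Set M)} (h : (fullType c '' 𝓢).Finite) :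
    ∃ K, ∀ s ∈ 𝓢, ∀ t ∈ 𝓢, rankedType c K s = rankedType c K t → fullType c s = fullType c t := by
  classical
  let I := fullType c '' 𝓢
  have : Finite I := h
  have h1 : ∀ p : I × I, ∃ k, p.1.1 ≠ p.2.1 → p.1.1 k ≠ p.2.1 k := by
    intro p
    by_cases hp : p.1.1 = p.2.1
    · exact ⟨0, fun h => absurd hp h⟩
    · obtain ⟨k, hk⟩ := Function.ne_iff.1 hp
      exact ⟨k, fun _ => hk⟩
  choose k hk using h1
  obtain ⟨K, hK⟩ := (Set.finite_range k).bddAbove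
  refine ⟨K, fun s hs t ht hst => ?_⟩
  by_contra hne
  exact hk (⟨_, s, hs, rfl⟩, ⟨_, t, ht, rfl⟩) hne (rankedType_eq_of_le c c (hK ⟨_, rfl⟩) hst)

theorem finite_fullType_of_rank [Finite ι] {𝓢 : Set (Set M)} {K : ℕ}
    (h : ∀ s ∈ 𝓢, ∀ t ∈ 𝓢, rankedType c K s = rankedType c K t → fullType c s = fullType c t) :
    (fullType c '' 𝓢).Finite := by
  refine Set.Finite.of_finite_image (f := fun F => F K) (Set.toFinite _) ?_
  rintro _ ⟨s, hs, rfl⟩ _ ⟨t, ht, rfl⟩ hst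
  exact h s hs t ht hst

end RankedTypes

section Intervals

variable {ι M : Type} [LinearOrder M]

/-- The open interval with optional endpoints. -/
def optIoo (lo hi : Option M) : Set M := {z | (∀ a ∈ lo, a < z) ∧ ∀ b ∈ hi, z < b}

variable (c : ι → Set M)

/-- Only finitely many full types are realized by the interval traces of `s`. -/
def FiniteIntervalTypes (s : Set M) : Prop :=
  (Set.range fun p : Option M × Option M => fullType c (s ∩ optIoo p.1 p.2)).Finite

/-- Only finitely many full types are realized by the open intervals with endpoints in `s`. -/
def LocallyFiniteTypes (s : Set M) : Prop :=
  (fullType c '' {t | ∃ x ∈ s, ∃ y ∈ s, t = Ioo x y}).Finite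

theorem LocallyFiniteTypes.mono {s t : Set M} (h : LocallyFiniteTypes c t) (hst : s ⊆ t) :
    LocallyFiniteTypes c s :=
  h.subset (image_mono fun _ ⟨x, hx, y, hy, e⟩ => ⟨x, hst hx, y, hst hy, e⟩)

theorem FiniteIntervalTypes.union {s t : Set M} (hs : FiniteIntervalTypes c s)
    (ht : FiniteIntervalTypes c t) (hst : ∀ x ∈ s, ∀ y ∈ t, x < y) :
    FiniteIntervalTypes c (s ∪ t) := by
  refine (hs.image2 (fun σ τ k => RankedType.add k (σ k) (τ k)) ht).subset ?_
  rintro _ ⟨p, rfl⟩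
  refine ⟨_, ⟨p, rfl⟩, _, ⟨p, rfl⟩, ?_⟩
  simp only [union_inter_distrib_right]
  exact (fullType_union c fun x hx y hy => hst x hx.1 y hy.1).symm

theorem finite_image_of_determined {α β γ : Type*} [LinearOrder α] {s : Set α} {g : α → β}
    {h : α → α → γ} (hfin : (image2 h s s).Finite)
    (hdet : ∀ u ∈ s, ∀ z ∈ s, ∀ w ∈ s, u < z → u < w → h u z = h u w → g z = g w) :
    (g '' s).Finite := by
  classical
  by_contra hinf
  obtain ⟨W, hWs, hW⟩ := (surjOn_image g s).exists_bijOn_subset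
  have hWinf : W.Infinite := fun hfinW => hinf (hW.image_eq ▸ hfinW.image g)
  obtain ⟨F, hFW, hF⟩ := hWinf.exists_subset_card_eq (hfin.toFinset.card + 2)
  have hFne : F.Nonempty := Finset.card_pos.1 (by omega)
  let u := F.min' hFne
  have hu : u ∈ F := F.min'_mem hFne
  obtain ⟨z, hz, w, hw, hne, heq⟩ := Finset.exists_ne_map_eq_of_card_lt_of_maps_to
    (s := F.erase u) (t := hfin.toFinset) (f := h u)
    (by rw [Finset.card_erase_of_mem hu]; omega)
    (fun z hz => by
      simpa using mem_image2_of_mem (hWs (hFW hu)) (hWs (hFW (Finset.mem_of_mem_erase hz))))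
  have hlt : ∀ z ∈ F.erase u, u < z := fun z hz =>
    lt_of_le_of_ne (F.min'_le z (Finset.mem_of_mem_erase hz)) (Finset.ne_of_mem_erase hz).symm
  have hz' := hFW (Finset.mem_of_mem_erase hz)
  have hw' := hFW (Finset.mem_of_mem_erase hw)
  exact hne (hW.injOn hz' hw' (hdet u (hWs (hFW hu)) z (hWs hz') w (hWs hw')
    (hlt z hz) (hlt w hw) heq))

theorem LocallyFiniteTypes.finiteIntervalTypes {s : Set M} (hs : s.OrdConnected)
    (h : LocallyFiniteTypes c s) : FiniteIntervalTypes c s := by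
  have hsub : ∀ x ∈ s, ∀ y ∈ s, s ∩ Ioo x y = Ioo x y := fun x hx y hy =>
    inter_eq_right.2 (Ioo_subset_Icc_self.trans (hs.out hx hy))
  have hIio : ((fun z => fullType c (s ∩ Iio z)) '' s).Finite := by
    refine finite_image_of_determined (h := fun u z => fullType c (Ioo u z))
      (h.subset ?_) ?_
    · rintro _ ⟨x, hx, y, hy, rfl⟩
      exact ⟨_, ⟨x, hx, y, hy, rfl⟩, rfl⟩
    · intro u hu z hz w hw huz huw heq
      have key : ∀ z ∈ s, u < z → s ∩ Iio z = (s ∩ Iic u) ∪ Ioo u z := by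
        intro z hz huz
        rw [← hsub u hu z hz]
        ext y
        simp only [mem_inter_iff, mem_union, mem_Iio, mem_Iic, mem_Ioo]
        rcases le_or_gt y u with hyu | hyu
        · simp [hyu, hyu.not_gt, hyu.trans_lt huz]
        · simp [hyu, hyu.not_ge]
      have hlt : ∀ z, ∀ x ∈ s ∩ Iic u, ∀ y ∈ Ioo u z, x < y :=
        fun z x hx y hy => lt_of_le_of_lt hx.2 hy.1
      simp only [key z hz huz, key w hw huw]
      rw [fullType_union c (hlt z), fullType_union c (hlt w), heq]
  have hIoi : ((fun z => fullType c (s ∩ Ioi z)) '' s).Finite := by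
    refine finite_image_of_determined (α := Mᵒᵈ) (s := OrderDual.ofDual ⁻¹' s)
      (g := fun z => fullType c (s ∩ Ioi (OrderDual.ofDual z)))
      (h := fun u z => fullType c (Ioo (OrderDual.ofDual z) (OrderDual.ofDual u)))
      (h.subset ?_) ?_
    · rintro _ ⟨x, hx, y, hy, rfl⟩
      exact ⟨_, ⟨y, hy, x, hx, rfl⟩, rfl⟩
    · intro u (hu : OrderDual.ofDual u ∈ s) z hz w hw huz huw heq
      have key : ∀ z ∈ s, z < OrderDual.ofDual u →
          s ∩ Ioi z = Ioo z (OrderDual.ofDual u) ∪ (s ∩ Ici (OrderDual.ofDual u)) := by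
        intro z hz huz
        rw [← hsub z hz _ hu]
        ext y
        simp only [mem_inter_iff, mem_union, mem_Ioi, mem_Ici, mem_Ioo]
        rcases lt_or_ge y (OrderDual.ofDual u) with hyu | hyu
        · simp [hyu, hyu.not_ge]
        · simp [hyu, hyu.not_gt, huz.trans_le hyu]
      have hlt : ∀ z, ∀ x ∈ Ioo z (OrderDual.ofDual u), ∀ y ∈ s ∩ Ici (OrderDual.ofDual u),
          x < y := fun z x hx y hy => lt_of_lt_of_le hx.2 hy.2
      change fullType c (s ∩ Ioi (OrderDual.ofDual z)) = fullType c (s ∩ Ioi (OrderDual.ofDual w))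
      rw [key (OrderDual.ofDual z) hz huz, key (OrderDual.ofDual w) hw huw,
        fullType_union c (hlt _), fullType_union c (hlt _), heq]
  have hlo : ∀ lo : Option M, (∀ z ∈ s, ∀ a ∈ lo, a < z) ∨ (∀ z ∈ s, ¬ ∀ a ∈ lo, a < z) ∨
      ∃ a ∈ s, lo = some a := by
    rintro (_ | a)
    · simp
    by_cases ha : a ∈ s
    · exact Or.inr (Or.inr ⟨a, ha, rfl⟩)
    by_cases h : ∃ z ∈ s, a < z
    · obtain ⟨z, hz, haz⟩ := h
      refine Or.inl fun w hw b hb => ?_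
      cases hb
      by_contra hwa
      exact ha (hs.out hw hz ⟨not_lt.1 hwa, haz.le⟩)
    · refine Or.inr (Or.inl fun z hz hza => h ⟨z, hz, hza a rfl⟩)
  have hhi : ∀ hi : Option M, (∀ z ∈ s, ∀ b ∈ hi, z < b) ∨ (∀ z ∈ s, ¬ ∀ b ∈ hi, z < b) ∨
      ∃ b ∈ s, hi = some b := by
    rintro (_ | a)
    · simp
    by_cases ha : a ∈ s
    · exact Or.inr (Or.inr ⟨a, ha, rfl⟩)
    by_cases h : ∃ z ∈ s, z < a
    · obtain ⟨z, hz, haz⟩ := h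
      refine Or.inl fun w hw b hb => ?_
      cases hb
      by_contra hwa
      exact ha (hs.out hz hw ⟨haz.le, not_lt.1 hwa⟩)
    · refine Or.inr (Or.inl fun z hz hza => h ⟨z, hz, hza a rfl⟩)
  refine ((((Set.finite_singleton (fullType c ∅)).insert (fullType c s)).union
    (hIio.union hIoi)).union h).subset ?_
  rintro _ ⟨⟨lo, hi⟩, rfl⟩
  dsimp only
  rcases hlo lo with h1 | h1 | ⟨a, ha, rfl⟩
  · rcases hhi hi with h2 | h2 | ⟨b, hb, rfl⟩
    · have : s ∩ optIoo lo hi = s := inter_eq_left.2 fun z hz => ⟨h1 z hz, h2 z hz⟩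
      simp [this]
    · have : s ∩ optIoo lo hi = ∅ :=
        eq_empty_iff_forall_notMem.2 fun z hz => h2 z hz.1 hz.2.2
      simp [this]
    · have : s ∩ optIoo lo (some b) = s ∩ Iio b := by
        ext z
        exact ⟨fun hz => ⟨hz.1, hz.2.2 b rfl⟩,
          fun hz => ⟨hz.1, h1 z hz.1, fun _ h => by cases h; exact hz.2⟩⟩
      rw [this]
      exact Or.inl (Or.inr (Or.inl ⟨b, hb, rfl⟩))
  · have : s ∩ optIoo lo hi = ∅ :=
      eq_empty_iff_forall_notMem.2 fun z hz => h1 z hz.1 hz.2.1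
    simp [this]
  · rcases hhi hi with h2 | h2 | ⟨b, hb, rfl⟩
    · have : s ∩ optIoo (some a) hi = s ∩ Ioi a := by
        ext z
        exact ⟨fun hz => ⟨hz.1, hz.2.1 a rfl⟩,
          fun hz => ⟨hz.1, fun _ h => by cases h; exact hz.2, h2 z hz.1⟩⟩
      rw [this]
      exact Or.inl (Or.inr (Or.inr ⟨a, ha, rfl⟩))
    · have : s ∩ optIoo (some a) hi = ∅ :=
        eq_empty_iff_forall_notMem.2 fun z hz => h2 z hz.1 hz.2.2
      simp [this]
    · have : s ∩ optIoo (some a) (some b) = Ioo a b := by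
        rw [← hsub a ha b hb]
        ext z
        exact ⟨fun hz => ⟨hz.1, hz.2.1 a rfl, hz.2.2 b rfl⟩,
          fun hz => ⟨hz.1, fun _ h => by cases h; exact hz.2.1,
            fun _ h => by cases h; exact hz.2.2⟩⟩
      rw [this]
      exact Or.inr ⟨_, ⟨a, ha, b, hb, rfl⟩, rfl⟩

/-- A convex set covered by finitely many convex sets with locally finitely many types has
finitely many interval types. -/
theorem finiteIntervalTypes_of_cover {κ : Type*} (C : κ → Set M) (hC : ∀ i, (C i).OrdConnected)
    (hfin : ∀ i, LocallyFiniteTypes c (C i)) (F : Finset κ) {D : Set M} (hD : D.OrdConnected)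
    (hDF : ∀ x ∈ D, ∃ i ∈ F, x ∈ C i) : FiniteIntervalTypes c D := by
  classical
  induction F using Finset.induction_on generalizing D with
  | empty =>
    have : D = ∅ := eq_empty_iff_forall_notMem.2 fun x hx => by simpa using hDF x hx
    subst this
    refine (Set.finite_singleton (fullType c ∅)).subset ?_
    rintro _ ⟨p, rfl⟩
    simp
  | insert i F _ ih =>
    have hDC : (D ∩ C i).OrdConnected := hD.inter (hC i)
    by_cases hne : (D ∩ C i).Nonempty
    · obtain ⟨w, hw⟩ := hne
      have hlow : FiniteIntervalTypes c {z ∈ D | ∀ y ∈ D ∩ C i, z < y} := by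
        refine ih ⟨fun x hx y hy z hz => ⟨hD.out hx.1 hy.1 hz, fun v hv =>
          lt_of_le_of_lt hz.2 (hy.2 v hv)⟩⟩ fun x hx => ?_
        obtain ⟨j, hj, hxj⟩ := hDF x hx.1
        rcases Finset.mem_insert.1 hj with rfl | hj
        · exact absurd (hx.2 x ⟨hx.1, hxj⟩) (lt_irrefl x)
        · exact ⟨j, hj, hxj⟩
      have hhigh : FiniteIntervalTypes c {z ∈ D | ∀ y ∈ D ∩ C i, y < z} := by
        refine ih ⟨fun x hx y hy z hz => ⟨hD.out hx.1 hy.1 hz, fun v hv =>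
          lt_of_lt_of_le (hx.2 v hv) hz.1⟩⟩ fun x hx => ?_
        obtain ⟨j, hj, hxj⟩ := hDF x hx.1
        rcases Finset.mem_insert.1 hj with rfl | hj
        · exact absurd (hx.2 x ⟨hx.1, hxj⟩) (lt_irrefl x)
        · exact ⟨j, hj, hxj⟩
      have hmid : FiniteIntervalTypes c (D ∩ C i) :=
        ((hfin i).mono c inter_subset_right).finiteIntervalTypes c hDC
      have hunion := (hlow.union c hmid fun x hx y hy => hx.2 y hy).union c hhigh (by
        rintro x (hx | hx) y hy
        · exact (hx.2 w hw).trans (hy.2 w hw)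
        · exact hy.2 x hx)
      convert hunion using 1
      ext z
      simp only [mem_union, mem_ofPred_eq]
      refine ⟨fun hz => ?_, fun hz => ?_⟩
      · by_cases hzC : z ∈ D ∩ C i
        · exact Or.inl (Or.inr hzC)
        rcases lt_trichotomy z w with h | rfl | h
        · refine Or.inl (Or.inl ⟨hz, fun y hy => ?_⟩)
          by_contra hyz
          exact hzC (hDC.out hy hw ⟨not_lt.1 hyz, h.le⟩)
        · exact absurd hw hzC
        · refine Or.inr ⟨hz, fun y hy => ?_⟩
          by_contra hyz
          exact hzC (hDC.out hw hy ⟨h.le, not_lt.1 hyz⟩)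
      · rcases hz with (hz | hz) | hz
        exacts [hz.1, hz.1, hz.1]
    · refine ih hD fun x hx => ?_
      obtain ⟨j, hj, hxj⟩ := hDF x hx
      rcases Finset.mem_insert.1 hj with rfl | hj
      · exact absurd ⟨x, hx, hxj⟩ hne
      · exact ⟨j, hj, hxj⟩

end Intervals

section Definability

variable {ι : Type}

/-- A property of tuples in colored linear orders which is uniformly first-order definable. -/
def UniformlyDefinable {α : Type}
    (P : ∀ (M : Type) [LinearOrder M], (ι → Set M) → (α → M) → Prop) : Prop :=
  ∃ φ : (CLOLang ι).Formula α, ∀ (M : Type) [LinearOrder M] (c : ι → Set M) (v : α → M),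
    Sat M c φ v ↔ P M c v

namespace UniformlyDefinable

variable {α β : Type} {P Q : ∀ (M : Type) [LinearOrder M], (ι → Set M) → (α → M) → Prop}

theorem congr (hP : UniformlyDefinable P)
    (h : ∀ (M : Type) [LinearOrder M] (c : ι → Set M) (v : α → M), P M c v ↔ Q M c v) :
    UniformlyDefinable Q := by
  obtain ⟨φ, hφ⟩ := hP
  exact ⟨φ, fun M _ c v => (hφ M c v).trans (h M c v)⟩

theorem sat (φ : (CLOLang ι).Formula β) (f : β → α) :
    UniformlyDefinable fun M _ c (v : α → M) => Sat M c φ (v ∘ f) :=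
  ⟨φ.relabel f, fun M _ c v => by simp only [Sat, Formula.realize_relabel]⟩

theorem not (hP : UniformlyDefinable P) :
    UniformlyDefinable fun M _ c (v : α → M) => ¬ P M c v := by
  obtain ⟨φ, hφ⟩ := hP
  exact ⟨φ.not, fun M _ c v => by
    simp only [← hφ]
    simp only [Sat, Formula.realize_not]⟩

theorem and (hP : UniformlyDefinable P) (hQ : UniformlyDefinable Q) :
    UniformlyDefinable fun M _ c (v : α → M) => P M c v ∧ Q M c v := by
  obtain ⟨φ, hφ⟩ := hP
  obtain ⟨ψ, hψ⟩ := hQ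
  exact ⟨φ ⊓ ψ, fun M _ c v => by
    simp only [← hφ, ← hψ]
    simp only [Sat, Formula.realize_inf]⟩

theorem or (hP : UniformlyDefinable P) (hQ : UniformlyDefinable Q) :
    UniformlyDefinable fun M _ c (v : α → M) => P M c v ∨ Q M c v :=
  (hP.not.and hQ.not).not.congr fun M _ c v => by tauto

theorem const (p : Prop) : UniformlyDefinable fun M _ (_ : ι → Set M) (_ : α → M) => p := by
  by_cases hp : p
  · exact ⟨⊤, fun M _ c v => by simp [Sat, hp]⟩
  · exact ⟨⊥, fun M _ c v => by simp [Sat, hp]⟩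

theorem iff (hP : UniformlyDefinable P) (hQ : UniformlyDefinable Q) :
    UniformlyDefinable fun M _ c (v : α → M) => (P M c v ↔ Q M c v) :=
  ((hP.and hQ).or (hP.not.and hQ.not)).congr fun M _ c v => by tauto

theorem all_finite {J : Type} [Finite J]
    {P : J → ∀ (M : Type) [LinearOrder M], (ι → Set M) → (α → M) → Prop}
    (hP : ∀ j, UniformlyDefinable (P j)) :
    UniformlyDefinable fun M _ c (v : α → M) => ∀ j, P j M c v := by
  choose φ hφ using hP
  refine ⟨Formula.iInf φ, fun M _ c v => ?_⟩
  simp only [← hφ]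
  simp only [Sat, Formula.realize_iInf]

theorem ex {P : ∀ (M : Type) [LinearOrder M], (ι → Set M) → (α ⊕ Unit → M) → Prop}
    (hP : UniformlyDefinable P) :
    UniformlyDefinable fun M _ c (v : α → M) => ∃ x : M, P M c (Sum.elim v fun _ => x) := by
  obtain ⟨φ, hφ⟩ := hP
  refine ⟨Formula.iExs Unit φ, fun M _ c v => ?_⟩
  simp only [← hφ]
  simp only [Sat, Formula.realize_iExs]
  exact ⟨fun ⟨w, hw⟩ => ⟨w (), hw⟩, fun ⟨x, hx⟩ => ⟨fun _ => x, hx⟩⟩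

theorem lt (a b : α) : UniformlyDefinable fun M _ (_ : ι → Set M) (v : α → M) => v a < v b :=
  ⟨Relations.formula₂ (L := CLOLang ι) (CLORel.lt : CLORel ι 2) (Term.var a) (Term.var b),
    fun M _ c v => by
      let _ := CLOStr ι M c
      exact Formula.realize_rel₂⟩

theorem color (i : ι) (a : α) :
    UniformlyDefinable fun M _ (c : ι → Set M) (v : α → M) => v a ∈ c i :=
  ⟨Relations.formula₁ (L := CLOLang ι) (CLORel.color i : CLORel ι 1) (Term.var a),
    fun M _ c v => by
      let _ := CLOStr ι M c
      exact Formula.realize_rel₁⟩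

theorem mem_optIoo (lo hi : Option α) (a : α) :
    UniformlyDefinable fun M _ (_ : ι → Set M) (v : α → M) =>
      v a ∈ optIoo (lo.map v) (hi.map v) := by
  refine UniformlyDefinable.and ?_ ?_
  · cases lo with
    | none => exact (const True).congr fun M _ c v => by simp
    | some b => exact (lt b a).congr fun M _ c v => by simp
  · cases hi with
    | none => exact (const True).congr fun M _ c v => by simp
    | some b => exact (lt a b).congr fun M _ c v => by simp

end UniformlyDefinable

theorem optIoo_inter_Iio {M : Type} [LinearOrder M] {lo hi : Option M} {x : M}
    (hx : x ∈ optIoo lo hi) : optIoo lo hi ∩ Iio x = optIoo lo (some x) := by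
  ext z
  refine ⟨fun hz => ⟨hz.1.1, fun b hb => by cases hb; exact hz.2⟩, fun hz => ?_⟩
  have hzx : z < x := hz.2 x rfl
  exact ⟨⟨hz.1, fun b hb => hzx.trans (hx.2 b hb)⟩, hzx⟩

theorem optIoo_inter_Ioi {M : Type} [LinearOrder M] {lo hi : Option M} {x : M}
    (hx : x ∈ optIoo lo hi) : optIoo lo hi ∩ Ioi x = optIoo (some x) hi := by
  ext z
  refine ⟨fun hz => ⟨fun b hb => by cases hb; exact hz.2, hz.1.2⟩, fun hz => ?_⟩
  have hzx : x < z := hz.1 x rfl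
  exact ⟨⟨fun b hb => (hx.1 b hb).trans hzx, hz.2⟩, hzx⟩

/-- Ranked types of intervals are uniformly definable in terms of the endpoints. -/
theorem uniformlyDefinable_rankedType [Finite ι] (k : ℕ) {α : Type} (lo hi : Option α)
    (τ : RankedType ι k) : UniformlyDefinable fun M _ (c : ι → Set M) (v : α → M) =>
      rankedType c k (optIoo (lo.map v) (hi.map v)) = τ := by
  induction k generalizing α with
  | zero => exact (UniformlyDefinable.const True).congr fun M _ c v => iff_of_true trivial rfl
  | succ k ih =>
    let τ' : Set (Set ι × RankedType ι k × RankedType ι k) := τ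
    have h1 : ∀ p : Set ι × RankedType ι k × RankedType ι k,
        UniformlyDefinable fun M _ (c : ι → Set M) (v : α ⊕ Unit → M) =>
          v (Sum.inr ()) ∈ optIoo ((lo.map Sum.inl).map v) ((hi.map Sum.inl).map v) ∧
          (∀ i, v (Sum.inr ()) ∈ c i ↔ i ∈ p.1) ∧
          rankedType c k (optIoo ((lo.map Sum.inl).map v) ((some (Sum.inr ())).map v)) = p.2.1 ∧
          rankedType c k (optIoo ((some (Sum.inr ())).map v) ((hi.map Sum.inl).map v)) = p.2.2 :=
      fun p => (UniformlyDefinable.mem_optIoo _ _ _).and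
        ((UniformlyDefinable.all_finite fun i =>
          (UniformlyDefinable.color i _).iff (UniformlyDefinable.const _)).and
        ((ih _ _ _).and (ih _ _ _)))
    refine (UniformlyDefinable.all_finite fun p =>
      (UniformlyDefinable.const (p ∈ τ')).iff (h1 p).ex).congr fun M _ c v => ?_
    rw [rankedType_succ]
    refine Iff.trans ?_ (Set.ext_iff (b := τ')).symm
    refine forall_congr' fun p => ?_
    refine iff_comm.trans (iff_congr ?_ Iff.rfl)
    refine exists_congr fun x => ?_
    have hmap : ∀ o : Option α, (o.map Sum.inl).map (Sum.elim v fun _ : Unit => x) = o.map v := by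
      rintro (_ | _) <;> rfl
    simp only [hmap, Sum.elim_inr, Option.map_some]
    refine and_congr_right fun hx => ?_
    rw [optIoo_inter_Iio hx, optIoo_inter_Ioi hx, Prod.ext_iff, Prod.ext_iff, Set.ext_iff]
    rfl

/-- The existence of an interval of a given ranked type is expressible by a sentence. -/
theorem uniformlyDefinable_exists_rankedType [Finite ι] (k : ℕ) (τ : RankedType ι k) :
    UniformlyDefinable fun M _ (c : ι → Set M) (_ : Empty → M) =>
      ∃ lo hi : Option M, rankedType c k (optIoo lo hi) = τ := by
  have h00 := uniformlyDefinable_rankedType k (α := Empty) none none τ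
  have h10 := (uniformlyDefinable_rankedType k (α := Empty ⊕ Unit) (some (Sum.inr ())) none τ).ex
  have h01 := (uniformlyDefinable_rankedType k (α := Empty ⊕ Unit) none (some (Sum.inr ())) τ).ex
  have h11 := (uniformlyDefinable_rankedType k (α := (Empty ⊕ Unit) ⊕ Unit)
    (some (Sum.inl (Sum.inr ()))) (some (Sum.inr ())) τ).ex.ex
  refine (h00.or (h10.or (h01.or h11))).congr fun M _ c v => ?_
  simp only [Option.map_none, Option.map_some, Sum.elim_inr, Sum.elim_inl]
  constructor
  · rintro (h | ⟨x, h⟩ | ⟨x, h⟩ | ⟨x, y, h⟩)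
    exacts [⟨_, _, h⟩, ⟨_, _, h⟩, ⟨_, _, h⟩, ⟨_, _, h⟩]
  · rintro ⟨_ | x, _ | y, h⟩
    exacts [Or.inl h, Or.inr (Or.inr (Or.inl ⟨y, h⟩)), Or.inr (Or.inl ⟨x, h⟩),
      Or.inr (Or.inr (Or.inr ⟨x, y, h⟩))]

theorem UniformlyDefinable.iff_of_cloEquiv
    {P : ∀ (M : Type) [LinearOrder M], (ι → Set M) → (Empty → M) → Prop}
    (hP : UniformlyDefinable P) {M N : Type} [LinearOrder M] [LinearOrder N] {c : ι → Set M}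
    {d : ι → Set N} (h : CLOEquiv ι M c N d) (v : Empty → M) (w : Empty → N) :
    P M c v ↔ P N d w := by
  obtain ⟨φ, hφ⟩ := hP
  rw [← hφ, ← hφ, Unique.eq_default v, Unique.eq_default w]
  let _ := CLOStr ι M c
  let _ := CLOStr ι N d
  exact elementarilyEquivalent_iff.1 h φ

end Definability

section Conversion

variable {ι : Type}

instance : (CLOLang ι).IsRelational := fun _ => inferInstanceAs (IsEmpty Empty)

instance [Countable ι] (n : ℕ) : Countable (CLORel ι n) := by
  let f : CLORel ι n → Option ι := fun r => match r with
    | .lt => none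
    | .color i => some i
  refine Function.Injective.countable (f := f) ?_
  rintro (_ | i) s h <;> cases s <;> simp_all [f]

instance [Countable ι] : Countable (CLOLang ι).Symbols :=
  inferInstanceAs (Countable ((Σ _ : ℕ, Empty) ⊕ Σ n, CLORel ι n))

/-- A structure elementarily equivalent to a colored linear order is a colored linear order. -/
theorem exists_cloStr_eq {M N : Type} [LinearOrder M] (c : ι → Set M)
    [inst : (CLOLang ι).Structure N]
    (h : let _ := CLOStr ι M c; N ≅[CLOLang ι] M) :
    ∃ (_ : LinearOrder N) (d : ι → Set N), CLOStr ι N d = inst := by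
  classical
  let _ := CLOStr ι M c
  have h : N ≅[CLOLang ι] M := h
  let r : (CLOLang ι).Relations 2 := (CLORel.lt : CLORel ι 2)
  have hirr : N ⊨ r.irreflexive := (elementarilyEquivalent_iff.1 h _).2
    (Relations.realize_irreflexive.2 ⟨fun x => lt_irrefl x⟩)
  have htrans : N ⊨ r.transitive := (elementarilyEquivalent_iff.1 h _).2
    (Relations.realize_transitive.2 ⟨fun x y z (h1 : x < y) (h2 : y < z) => h1.trans h2⟩)
  let tri : (CLOLang ι).Sentence :=
    (r.boundedFormula₂ (&0) (&1) ⊔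
      (r.boundedFormula₂ (&1) (&0) ⊔ Term.bdEqual (&0) (&1))).all.all
  have htri : ∀ (K : Type) [(CLOLang ι).Structure K], K ⊨ tri ↔
      ∀ x y : K, Structure.RelMap r ![x, y] ∨ Structure.RelMap r ![y, x] ∨ x = y := by
    intro K _
    simp only [tri, Sentence.Realize, Formula.Realize, BoundedFormula.realize_all,
      BoundedFormula.realize_sup, BoundedFormula.realize_rel₂, BoundedFormula.realize_bdEqual]
    rfl
  have htri' := (htri N).1 ((elementarilyEquivalent_iff.1 h _).2 ((htri M).2 fun x y => by
    rcases lt_trichotomy x y with h | h | h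
    exacts [Or.inl h, Or.inr (Or.inr h), Or.inr (Or.inl h)]))
  let lt : N → N → Prop := fun x y => Structure.RelMap r ![x, y]
  have hI : Std.Irrefl lt := Relations.realize_irreflexive.1 hirr
  have hT : IsTrans N lt := Relations.realize_transitive.1 htrans
  have hTri : Std.Trichotomous lt := ⟨fun x y h1 h2 => by
    rcases htri' x y with h | h | h
    exacts [absurd h h1, absurd h h2, h]⟩
  have hS : IsStrictTotalOrder N lt := { }
  refine ⟨linearOrderOfSTO lt, fun i => {x | Structure.RelMap
    (show (CLOLang ι).Relations 1 from (CLORel.color i : CLORel ι 1)) ![x]}, ?_⟩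
  refine Structure.ext (funext fun n => funext fun f => Empty.elim f) ?_
  funext n R
  change CLORel ι n at R
  funext v
  cases R with
  | lt =>
    change Structure.RelMap r ![v 0, v 1] = _
    refine congrArg _ ?_
    ext i; fin_cases i <;> rfl
  | color i =>
    change Structure.RelMap _ ![v 0] = _
    refine congrArg _ ?_
    ext i; fin_cases i; rfl

theorem locallyFiniteTypes_of_aleph0CatTheory [Finite ι] {M : Type} [LinearOrder M]
    (c : ι → Set M) (h : Aleph0CatTheory ι (CLOTheory ι M c)) : LocallyFiniteTypes c univ := by
  let _ := CLOStr ι M c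
  have hfin := finite_range_type_of_categorical (L := CLOLang ι) M 2 (by
    intro N₁ N₂ s₁ s₂ hc₁ hc₂ h₁ h₂
    obtain ⟨i₁, d₁, rfl⟩ := exists_cloStr_eq c h₁
    obtain ⟨i₂, d₂, rfl⟩ := exists_cloStr_eq c h₂
    exact h N₁ N₂ i₁ i₂ d₁ d₂ hc₁ hc₂ h₁ h₂)
  have hfac : (fun v : Fin 2 → M => fullType c (Ioo (v 0) (v 1))).FactorsThrough
      fun v : Fin 2 → M => {φ : (CLOLang ι).Formula (Fin 2) | φ.Realize v} := by
    intro v w hvw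
    funext k
    obtain ⟨φ, hφ⟩ := uniformlyDefinable_rankedType k (α := Fin 2) (some 0) (some 1)
      (rankedType c k (Ioo (w 0) (w 1)))
    have hIoo : ∀ u : Fin 2 → M,
        optIoo ((some (0 : Fin 2)).map u) ((some (1 : Fin 2)).map u) = Ioo (u 0) (u 1) := by
      intro u
      ext z
      simp [optIoo]
    have hv := hφ M c v
    have hw := hφ M c w
    beta_reduce at hv hw
    rw [hIoo] at hv hw
    exact hv.1 ((Set.ext_iff.1 hvw φ).2 (hw.2 rfl))
  refine (hfin.image (Function.extend (fun v : Fin 2 → M =>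
    {φ : (CLOLang ι).Formula (Fin 2) | φ.Realize v})
      (fun v : Fin 2 → M => fullType c (Ioo (v 0) (v 1)))
      fun _ k => RankedType.empty k)).subset ?_
  rintro _ ⟨_, ⟨x, _, y, _, rfl⟩, rfl⟩
  exact ⟨_, ⟨![x, y], rfl⟩, hfac.extend_apply _ _⟩

theorem locallyFiniteTypes_of_subColor {M : Type} [LinearOrder M] (c : ι → Set M) {s : Set M}
    (hs : s.OrdConnected) (h : LocallyFiniteTypes (subColor c s) univ) :
    LocallyFiniteTypes c s := by
  refine h.subset ?_
  rintro _ ⟨_, ⟨x, hx, y, hy, rfl⟩, rfl⟩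
  refine ⟨_, ⟨⟨x, hx⟩, mem_univ _, ⟨y, hy⟩, mem_univ _, rfl⟩, ?_⟩
  funext k
  have himage : (Subtype.val : s → M) '' Ioo ⟨x, hx⟩ ⟨y, hy⟩ = Ioo x y := by
    ext z
    refine ⟨?_, fun hz => ⟨⟨z, hs.out hx hy ⟨hz.1.le, hz.2.le⟩⟩, hz, rfl⟩⟩
    rintro ⟨w, hw, rfl⟩
    exact hw
  have := rankedType_image (subColor c s) c (f := (Subtype.val : s → M)) (fun _ _ h => h)
    (fun _ => rfl) k (Ioo ⟨x, hx⟩ ⟨y, hy⟩)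
  rw [himage] at this
  exact this.symm

/-- Every nonempty colored linear order has a sufficiently saturated elementary equivalent. -/
theorem exists_suffSaturated {M : Type} [LinearOrder M] [Nonempty M] (c : ι → Set M) :
    ∃ (S : Type) (_ : LinearOrder S) (cS : ι → Set S),
      CLOEquiv ι S cS M c ∧ SuffSaturated ι S cS := by
  let _ := CLOStr ι M c
  obtain ⟨S, s, hS, hsat, hhom⟩ := exists_saturated_homogeneous (L := CLOLang ι) M
  obtain ⟨i, cS, rfl⟩ := exists_cloStr_eq c hS
  refine ⟨S, i, cS, hS, hsat, fun m a b hab => ?_⟩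
  let _ := CLOStr ι S cS
  obtain ⟨g, hg⟩ := hhom m a b hab
  refine ⟨g.toEquiv, fun x y => ?_, fun k x => ?_, hg⟩
  · exact (g.map_rel (show (CLOLang ι).Relations 2 from (CLORel.lt : CLORel ι 2)) ![x, y]).symm
  · exact (g.map_rel (show (CLOLang ι).Relations 1 from (CLORel.color k : CLORel ι 1)) ![x]).symm

end Conversion

section LocalTypes

variable {ι S M₀ : Type} [LinearOrder S] [LinearOrder M₀] {cS : ι → Set S} {c₀ : ι → Set M₀}

theorem cloEquiv_iff {M N : Type} [LinearOrder M] [LinearOrder N] {c : ι → Set M}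
    {d : ι → Set N} : CLOEquiv ι M c N d ↔ CLOTheory ι M c = CLOTheory ι N d := Iff.rfl

/-- The convex formulas satisfied by a point. -/
def convexTypeOf (c₀ : ι → Set M₀) (cS : ι → Set S) (a : S) : Set ((CLOLang ι).Formula Unit) :=
  {ψ | ConvexFml ι M₀ c₀ ψ ∧ Sat S cS ψ fun _ => a}

theorem isConvexType_convexTypeOf (hS : CLOEquiv ι S cS M₀ c₀) (a : S) :
    IsConvexType ι M₀ c₀ (convexTypeOf c₀ cS a) := by
  refine ⟨fun _ h => h.1, ⟨S, inferInstance, cS, hS, a, fun _ h => h.2⟩, ?_⟩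
  rintro ψ hψ ⟨B, iB, cB, hB, b, hb⟩
  by_contra hmem
  have ha : ¬ Sat S cS ψ fun _ => a := fun h => hmem ⟨hψ, h⟩
  have hbψ : Sat B cB ψ fun _ => b := hb ψ (mem_insert _ _)
  have hconv : (FmlSet ι S cS ψ).OrdConnected := hψ S inferInstance cS hS
  by_cases hw : ∃ w, Sat S cS ψ (fun _ => w) ∧ w < a
  · obtain ⟨w, hw, hwa⟩ := hw
    obtain ⟨θ, hθ⟩ := ((UniformlyDefinable.sat (α := Unit ⊕ Unit) ψ fun _ => Sum.inr ()).and
      (UniformlyDefinable.lt (Sum.inr ()) (Sum.inl ())).not).ex.not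
    have hθ' : ∀ (M : Type) [LinearOrder M] (c : ι → Set M) (x : M),
        Sat M c θ (fun _ => x) ↔ ∀ y, Sat M c ψ (fun _ => y) → y < x := by
      intro M _ c x
      rw [hθ]
      push Not
      rfl
    refine lt_irrefl b ((hθ' B cB b).1 (hb θ (mem_insert_of_mem _ ⟨?_, ?_⟩)) b hbψ)
    · intro C iC cC _
      refine ⟨fun x hx y _ z hz => (hθ' C cC z).2 fun v hv => ?_⟩
      exact lt_of_lt_of_le ((hθ' C cC x).1 hx v hv) hz.1
    · refine (hθ' S cS a).2 fun y hy => ?_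
      by_contra hya
      exact ha (hconv.out hw hy ⟨hwa.le, not_lt.1 hya⟩)
  · obtain ⟨θ, hθ⟩ := ((UniformlyDefinable.sat (α := Unit ⊕ Unit) ψ fun _ => Sum.inr ()).and
      (UniformlyDefinable.lt (Sum.inl ()) (Sum.inr ())).not).ex.not
    have hθ' : ∀ (M : Type) [LinearOrder M] (c : ι → Set M) (x : M),
        Sat M c θ (fun _ => x) ↔ ∀ y, Sat M c ψ (fun _ => y) → x < y := by
      intro M _ c x
      rw [hθ]
      push Not
      rfl
    refine lt_irrefl b ((hθ' B cB b).1 (hb θ (mem_insert_of_mem _ ⟨?_, ?_⟩)) b hbψ)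
    · intro C iC cC _
      refine ⟨fun x _ y hy z hz => (hθ' C cC z).2 fun v hv => ?_⟩
      exact lt_of_le_of_lt hz.2 ((hθ' C cC y).1 hy v hv)
    · refine (hθ' S cS a).2 fun y hy => ?_
      rcases lt_trichotomy y a with h | rfl | h
      exacts [absurd ⟨y, hy, h⟩ hw, absurd hy ha, h]

theorem sat_iInf {J M α : Type} [Finite J] [LinearOrder M] (c : ι → Set M)
    (ψ : J → (CLOLang ι).Formula α) (v : α → M) :
    Sat M c (Formula.iInf ψ) v ↔ ∀ j, Sat M c (ψ j) v := by
  simp only [Sat, Formula.realize_iInf]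

theorem iInf_mem_convexTypeOf {J : Type} [Finite J] {a : S}
    {ψ : J → (CLOLang ι).Formula Unit} (h : ∀ j, ψ j ∈ convexTypeOf c₀ cS a) :
    Formula.iInf ψ ∈ convexTypeOf c₀ cS a := by
  refine ⟨fun B iB cB hB => ⟨fun x hx y hy z hz => ?_⟩, (sat_iInf _ _ _).2 fun j => (h j).2⟩
  refine (sat_iInf _ _ _).2 fun j => ?_
  exact ((h j).1 B iB cB hB).out ((sat_iInf _ _ _).1 hx j) ((sat_iInf _ _ _).1 hy j) hz

/-- Saturation for families of uniformly definable conditions. -/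
theorem Aleph0Saturated.exists_forall (hsat : Aleph0Saturated ι S cS) {m : ℕ} (a : Fin m → S)
    {J : Type} {Q : J → ∀ (M : Type) [LinearOrder M], (ι → Set M) → (Unit ⊕ Fin m → M) → Prop}
    (hQ : ∀ j, UniformlyDefinable (Q j))
    (h : ∀ t : Finset J, ∃ x, ∀ j ∈ t, Q j S cS (Sum.elim (fun _ => x) a)) :
    ∃ x, ∀ j, Q j S cS (Sum.elim (fun _ => x) a) := by
  classical
  choose φ hφ using hQ
  obtain ⟨x, hx⟩ := hsat m a (range φ) fun q hq => by
    rw [← image_univ] at hq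
    obtain ⟨t, -, rfl⟩ := Finset.subset_set_image_iff.1 hq
    obtain ⟨x, hx⟩ := h t
    refine ⟨x, fun ψ hψ => ?_⟩
    obtain ⟨j, hj, rfl⟩ := Finset.mem_image.1 hψ
    exact (hφ j S cS _).2 (hx j hj)
  exact ⟨x, fun j => (hφ j S cS _).1 (hx _ ⟨j, rfl⟩)⟩

/-- If every formula in a convex type has realizations bounding an interval of type `τ`, then so
does the whole type. -/
theorem exists_rankedType_of_forall_formula [Finite ι] (hsat : Aleph0Saturated ι S cS) (a : S)
    {k : ℕ} (τ : RankedType ι k)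
    (h : ∀ ψ ∈ convexTypeOf c₀ cS a, ∃ x ∈ FmlSet ι S cS ψ, ∃ y ∈ FmlSet ι S cS ψ,
      rankedType cS k (Ioo x y) = τ) :
    ∃ x ∈ TypeSet ι S cS (convexTypeOf c₀ cS a), ∃ y ∈ TypeSet ι S cS (convexTypeOf c₀ cS a),
      rankedType cS k (Ioo x y) = τ := by
  have hIoo : ∀ x y : S, optIoo (some x) (some y) = Ioo x y := fun x y => by
    ext z
    simp [optIoo]
  have hconj : ∀ t : Finset (convexTypeOf c₀ cS a), ∃ ψ ∈ convexTypeOf c₀ cS a,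
      ∀ θ ∈ t, FmlSet ι S cS ψ ⊆ FmlSet ι S cS θ.1 := fun t =>
    ⟨_, iInf_mem_convexTypeOf (J := t) (ψ := fun θ => θ.1.1) fun θ => θ.1.2,
      fun θ hθ x hx => (sat_iInf _ _ _).1 hx ⟨θ, hθ⟩⟩
  obtain ⟨x, hx⟩ := hsat.exists_forall (m := 0) Fin.elim0 (J := convexTypeOf c₀ cS a)
    (fun ψ => (UniformlyDefinable.sat ψ.1 fun _ => Sum.inl ()).and
      ((UniformlyDefinable.sat (α := (Unit ⊕ Fin 0) ⊕ Unit) ψ.1 fun _ => Sum.inr ()).and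
        (uniformlyDefinable_rankedType k (some (Sum.inl (Sum.inl ()))) (some (Sum.inr ())) τ)).ex)
    fun t => by
      obtain ⟨ψ, hψ, ht⟩ := hconj t
      obtain ⟨x, hx, y, hy, hxy⟩ := h ψ hψ
      exact ⟨x, fun θ hθ => ⟨ht θ hθ hx, y, ht θ hθ hy, by
        simpa only [Option.map_some, Sum.elim_inl, Sum.elim_inr, hIoo] using hxy⟩⟩
  obtain ⟨y, hy⟩ := hsat.exists_forall (m := 1) (fun _ => x) (J := convexTypeOf c₀ cS a)
    (fun ψ => (UniformlyDefinable.sat ψ.1 fun _ => Sum.inl ()).and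
      (uniformlyDefinable_rankedType k (some (Sum.inr 0)) (some (Sum.inl ())) τ))
    fun t => by
      obtain ⟨ψ, hψ, ht⟩ := hconj t
      obtain ⟨y, hy, hxy⟩ := (hx ⟨ψ, hψ⟩).2
      refine ⟨y, fun θ hθ => ⟨ht θ hθ hy, hxy⟩⟩
  obtain ⟨ψ, hψ, -⟩ := hconj ∅
  refine ⟨x, fun ψ hψ => (hx ⟨ψ, hψ⟩).1, y, fun ψ hψ => (hy ⟨ψ, hψ⟩).1, ?_⟩
  rw [← hIoo]
  exact (hy ⟨ψ, hψ⟩).2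

theorem ordConnected_typeSet_convexTypeOf (hS : CLOEquiv ι S cS M₀ c₀) (a : S) :
    (TypeSet ι S cS (convexTypeOf c₀ cS a)).OrdConnected :=
  ⟨fun _ hx _ hy _ hz ψ hψ => (hψ.1 S inferInstance cS hS).out (hx ψ hψ) (hy ψ hψ) hz⟩

/-- Local finiteness of types passes from the realizations of a convex type to the realizations
of one of its formulas. -/
theorem exists_formula_locallyFiniteTypes [Finite ι] (hS : CLOEquiv ι S cS M₀ c₀)
    (hsat : Aleph0Saturated ι S cS) (a : S)
    (h : LocallyFiniteTypes cS (TypeSet ι S cS (convexTypeOf c₀ cS a))) :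
    ∃ ψ ∈ convexTypeOf c₀ cS a, LocallyFiniteTypes cS (FmlSet ι S cS ψ) := by
  obtain ⟨K, hK⟩ := exists_rank_of_finite_fullType cS h
  have havoid : ∀ τ : RankedType ι (K + 1), ∃ ψ ∈ convexTypeOf c₀ cS a,
      (∃ x ∈ FmlSet ι S cS ψ, ∃ y ∈ FmlSet ι S cS ψ, rankedType cS (K + 1) (Ioo x y) = τ) →
      ∃ x ∈ TypeSet ι S cS (convexTypeOf c₀ cS a),
        ∃ y ∈ TypeSet ι S cS (convexTypeOf c₀ cS a), rankedType cS (K + 1) (Ioo x y) = τ := by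
    intro τ
    by_contra! hcon
    obtain ⟨ψ, hψ⟩ : (convexTypeOf c₀ cS a).Nonempty :=
      ⟨_, iInf_mem_convexTypeOf (J := Empty) (ψ := Empty.elim) fun j => j.elim⟩
    obtain ⟨x, hx, y, hy, hxy⟩ :=
      exists_rankedType_of_forall_formula hsat a τ fun ψ hψ => (hcon ψ hψ).1
    exact (hcon ψ hψ).2 x hx y hy hxy
  choose ψ hψ hψτ using havoid
  have hmem := iInf_mem_convexTypeOf hψ
  have hconv : (FmlSet ι S cS (Formula.iInf ψ)).OrdConnected := hmem.1 S inferInstance cS hS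
  have hreal : ∀ x ∈ FmlSet ι S cS (Formula.iInf ψ), ∀ y ∈ FmlSet ι S cS (Formula.iInf ψ),
      ∃ x' ∈ TypeSet ι S cS (convexTypeOf c₀ cS a),
        ∃ y' ∈ TypeSet ι S cS (convexTypeOf c₀ cS a),
          rankedType cS (K + 1) (Ioo x' y') = rankedType cS (K + 1) (Ioo x y) :=
    fun x hx y hy => hψτ _ ⟨x, (sat_iInf _ _ _).1 hx _, y, (sat_iInf _ _ _).1 hy _, rfl⟩
  refine ⟨_, hmem, finite_fullType_of_rank cS (K := K) fun s hs t ht hst =>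
    fullType_eq_of_rankedType_eq cS ?_ ?_ ?_ hs ht hst⟩
  · rintro _ ⟨x, hx, y, hy, rfl⟩ z hz
    refine ⟨x, hx, z, hconv.out hx hy ⟨hz.1.le, hz.2.le⟩, ?_⟩
    rw [Ioo_inter_Iio, min_eq_right hz.2.le]
  · rintro _ ⟨x, hx, y, hy, rfl⟩ z hz
    refine ⟨z, hconv.out hx hy ⟨hz.1.le, hz.2.le⟩, y, hy, ?_⟩
    rw [Ioo_inter_Ioi, max_eq_right hz.1.le]
  · rintro _ ⟨x, hx, y, hy, rfl⟩ _ ⟨z, hz, w, hw, rfl⟩ heq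
    obtain ⟨x', hx', y', hy', h1⟩ := hreal x hx y hy
    obtain ⟨z', hz', w', hw', h2⟩ := hreal z hz w hw
    rw [← h1, ← h2]
    refine congrFun (hK _ ⟨x', hx', y', hy', rfl⟩ _ ⟨z', hz', w', hw', rfl⟩ ?_) (K + 1)
    rw [rankedType_eq_of_succ cS cS h1, rankedType_eq_of_succ cS cS h2, heq]

theorem finiteIntervalTypes_of_locallySimple [Finite ι] (hLS : LocallySimple ι M₀ c₀)
    (hS : CLOEquiv ι S cS M₀ c₀) (hsat : SuffSaturated ι S cS) :
    FiniteIntervalTypes cS univ := by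
  have hloc : ∀ a : S, ∃ ψ ∈ convexTypeOf c₀ cS a, LocallyFiniteTypes cS (FmlSet ι S cS ψ) :=
    fun a => exists_formula_locallyFiniteTypes hS hsat.1 a <|
      locallyFiniteTypes_of_subColor cS (ordConnected_typeSet_convexTypeOf hS a) <|
      locallyFiniteTypes_of_aleph0CatTheory _ <|
      hLS S cS hS hsat _ (isConvexType_convexTypeOf hS a)
  choose ψ hψ hfin using hloc
  obtain ⟨t, ht⟩ : ∃ t : Finset S, ∀ x, ∃ a ∈ t, x ∈ FmlSet ι S cS (ψ a) := by
    by_contra! hcon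
    obtain ⟨x, hx⟩ := hsat.1.exists_forall (m := 0) Fin.elim0
      (fun a : S => (UniformlyDefinable.sat (ψ a) fun _ => Sum.inl ()).not) hcon
    exact hx x (hψ x).2
  exact finiteIntervalTypes_of_cover cS (fun a => FmlSet ι S cS (ψ a))
    (fun a => (hψ a).1 S inferInstance cS hS) hfin t ordConnected_univ fun x _ => ht x

/-- In a locally simple theory some finite rank determines the next one, uniformly in all
intervals of all models. -/
theorem exists_rank_of_locallySimple [Finite ι] [Nonempty M₀] (hLS : LocallySimple ι M₀ c₀) :
    ∃ K, ∀ (A B : Type) [LinearOrder A] [LinearOrder B] (cA : ι → Set A) (cB : ι → Set B),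
      CLOEquiv ι A cA M₀ c₀ → CLOEquiv ι B cB M₀ c₀ → ∀ lo hi lo' hi',
      rankedType cA K (optIoo lo hi) = rankedType cB K (optIoo lo' hi') →
      rankedType cA (K + 1) (optIoo lo hi) = rankedType cB (K + 1) (optIoo lo' hi') := by
  obtain ⟨S, iS, cS, hS, hsat⟩ := exists_suffSaturated c₀
  have hfin := finiteIntervalTypes_of_locallySimple hLS hS hsat
  obtain ⟨K, hK⟩ := exists_rank_of_finite_fullType cS
    (𝓢 := range fun p : Option S × Option S => optIoo p.1 p.2) (by
      rw [← range_comp]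
      simpa only [FiniteIntervalTypes, univ_inter, Function.comp_def] using hfin)
  refine ⟨K, fun A B _ _ cA cB hA hB lo hi lo' hi' heq => ?_⟩
  have hreal : ∀ (C : Type) [LinearOrder C] (cC : ι → Set C), CLOEquiv ι C cC M₀ c₀ →
      ∀ lo hi : Option C, ∃ lo' hi' : Option S,
        rankedType cS (K + 1) (optIoo lo' hi') = rankedType cC (K + 1) (optIoo lo hi) :=
    fun C _ cC hC lo hi =>
      ((uniformlyDefinable_exists_rankedType (K + 1) _).iff_of_cloEquiv (M := C) (N := S)
        (cloEquiv_iff.2 ((cloEquiv_iff.1 hC).trans (cloEquiv_iff.1 hS).symm))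
        Empty.elim Empty.elim).1
        ⟨lo, hi, rfl⟩
  obtain ⟨x, y, h1⟩ := hreal A cA hA lo hi
  obtain ⟨z, w, h2⟩ := hreal B cB hB lo' hi'
  rw [← h1, ← h2]
  refine congrFun (hK _ ⟨(x, y), rfl⟩ _ ⟨(z, w), rfl⟩ ?_) (K + 1)
  exact (rankedType_eq_of_succ cS cA h1).trans (heq.trans (rankedType_eq_of_succ cS cB h2).symm)

end LocalTypes

section BackAndForth

variable {ι A B : Type} [LinearOrder A] [LinearOrder B] {cA : ι → Set A} {cB : ι → Set B}

theorem BackForthEquiv.cloIso [Countable A] [Countable B] (h : BackForthEquiv ι A cA B cB) :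
    CLOIso ι A cA B cB := by
  obtain ⟨F, ⟨f₀, hf₀⟩, hiso, hforth, hback⟩ := h
  cases nonempty_encodable A
  cases nonempty_encodable B
  let 𝒟 : A ⊕ B → Order.Cofinal F := fun s => match s with
    | Sum.inl a => ⟨{f | ∃ b, (a, b) ∈ f.1}, fun f => by
        obtain ⟨g, hg, hfg, b, hb⟩ := hforth f.1 f.2 a
        exact ⟨⟨g, hg⟩, ⟨b, hb⟩, hfg⟩⟩
    | Sum.inr b => ⟨{f | ∃ a, (a, b) ∈ f.1}, fun f => by
        obtain ⟨g, hg, hfg, a, ha⟩ := hback f.1 f.2 b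
        exact ⟨⟨g, hg⟩, ⟨a, ha⟩, hfg⟩⟩
  let I := Order.idealOfCofinals (⟨f₀, hf₀⟩ : F) 𝒟
  have hA : ∀ a, ∃ b, ∃ f ∈ I, (a, b) ∈ f.1 := fun a => by
    obtain ⟨f, ⟨b, hb⟩, hf⟩ := Order.cofinal_meets_idealOfCofinals (⟨f₀, hf₀⟩ : F) 𝒟 (Sum.inl a)
    exact ⟨b, f, hf, hb⟩
  have hB : ∀ b, ∃ a, ∃ f ∈ I, (a, b) ∈ f.1 := fun b => by
    obtain ⟨f, ⟨a, ha⟩, hf⟩ := Order.cofinal_meets_idealOfCofinals (⟨f₀, hf₀⟩ : F) 𝒟 (Sum.inr b)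
    exact ⟨a, f, hf, ha⟩
  have hpair : ∀ p q : A × B, (∃ f ∈ I, p ∈ f.1) → (∃ f ∈ I, q ∈ f.1) →
      (p.1 < q.1 ↔ p.2 < q.2) ∧ (p.1 = q.1 ↔ p.2 = q.2) ∧ ∀ k, p.1 ∈ cA k ↔ p.2 ∈ cB k := by
    rintro p q ⟨f, hf, hp⟩ ⟨g, hg, hq⟩
    obtain ⟨k, -, hfk, hgk⟩ := I.directed f hf g hg
    exact hiso k.1 k.2 p (hfk hp) q (hgk hq)
  choose u hu using hA
  choose w hw using hB
  let e : A ≃ B := ⟨u, w, fun a => (hpair (w (u a), u a) (a, u a) (hw _) (hu _)).2.1.2 rfl,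
    fun b => (hpair (w b, u (w b)) (w b, b) (hu _) (hw _)).2.1.1 rfl⟩
  let _ := CLOStr ι A cA
  let _ := CLOStr ι B cB
  refine ⟨⟨e, fun f => Empty.elim f, fun {n} r x => ?_⟩⟩
  change CLORel ι n at r
  cases r with
  | lt => exact (hpair (_, _) (_, _) (hu (x 0)) (hu (x 1))).1.symm
  | color i => exact ((hpair (_, _) (_, _) (hu (x 0)) (hu (x 0))).2.2 i).symm

theorem exists_neighbours {X Y : Type} [LinearOrder Y] (g : X → Y) (f : Finset X) {m : Y}
    (hm : ∀ p ∈ f, g p ≠ m) : ∃ lo hi : Option X, (∀ u ∈ lo, u ∈ f) ∧ (∀ u ∈ hi, u ∈ f) ∧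
      m ∈ optIoo (lo.map g) (hi.map g) ∧
      ∀ p ∈ f, (∃ u ∈ lo, g p ≤ g u) ∨ ∃ u ∈ hi, g u ≤ g p := by
  classical
  have hlo : ∃ lo : Option X, (∀ u ∈ lo, u ∈ f ∧ g u < m) ∧
      ∀ p ∈ f, g p < m → ∃ u ∈ lo, g p ≤ g u := by
    rcases ({p ∈ f | g p < m} : Finset X).eq_empty_or_nonempty with h | h
    · refine ⟨none, by simp, fun p hp hpm => ?_⟩
      exact absurd (Finset.mem_filter.2 ⟨hp, hpm⟩) (h ▸ Finset.notMem_empty p)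
    · obtain ⟨u, hu, hmax⟩ := Finset.exists_max_image _ g h
      refine ⟨some u, ?_, fun p hp hpm => ⟨u, rfl, hmax p (Finset.mem_filter.2 ⟨hp, hpm⟩)⟩⟩
      rintro _ ⟨⟩
      exact Finset.mem_filter.1 hu
  have hhi : ∃ hi : Option X, (∀ u ∈ hi, u ∈ f ∧ m < g u) ∧
      ∀ p ∈ f, m < g p → ∃ u ∈ hi, g u ≤ g p := by
    rcases ({p ∈ f | m < g p} : Finset X).eq_empty_or_nonempty with h | h
    · refine ⟨none, by simp, fun p hp hpm => ?_⟩
      exact absurd (Finset.mem_filter.2 ⟨hp, hpm⟩) (h ▸ Finset.notMem_empty p)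
    · obtain ⟨u, hu, hmax⟩ := Finset.exists_min_image _ g h
      refine ⟨some u, ?_, fun p hp hpm => ⟨u, rfl, hmax p (Finset.mem_filter.2 ⟨hp, hpm⟩)⟩⟩
      rintro _ ⟨⟩
      exact Finset.mem_filter.1 hu
  obtain ⟨lo, hlo, hlo'⟩ := hlo
  obtain ⟨hi, hhi, hhi'⟩ := hhi
  refine ⟨lo, hi, fun u hu => (hlo u hu).1, fun u hu => (hhi u hu).1, ⟨?_, ?_⟩, fun p hp => ?_⟩
  · intro a ha
    obtain ⟨u, hu, rfl⟩ := Option.mem_map.1 ha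
    exact (hlo u hu).2
  · intro a ha
    obtain ⟨u, hu, rfl⟩ := Option.mem_map.1 ha
    exact (hhi u hu).2
  · rcases lt_or_gt_of_ne (hm p hp) with h | h
    exacts [Or.inl (hlo' p hp h), Or.inr (hhi' p hp h)]

/-- A finite partial isomorphism which preserves the ranked types of the intervals between
points of its domain. -/
def IsRankedPartialIso (cA : ι → Set A) (cB : ι → Set B) (K : ℕ) (f : Finset (A × B)) : Prop :=
  IsPartialIso ι cA cB f ∧ ∀ p q : Option (A × B), (∀ u ∈ p, u ∈ f) → (∀ u ∈ q, u ∈ f) →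
    rankedType cA K (optIoo (p.map Prod.fst) (q.map Prod.fst)) =
      rankedType cB K (optIoo (p.map Prod.snd) (q.map Prod.snd))

theorem optIoo_eq_empty {M : Type} [LinearOrder M] {a b : M} (h : b ≤ a) :
    optIoo (some a) (some b) = ∅ :=
  eq_empty_iff_forall_notMem.2 fun _ hz => ((hz.1 a rfl).trans (hz.2 b rfl)).not_ge h

theorem rankedType_optIoo_split {M : Type} [LinearOrder M] (c : ι → Set M) (k : ℕ)
    {lo hi : Option M} {x : M} (hx : x ∈ optIoo lo hi) :
    rankedType c k (optIoo lo hi) = RankedType.add k (rankedType c k (optIoo lo (some x)))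
      (RankedType.add k (RankedType.point (colorSet c x) k)
        (rankedType c k (optIoo (some x) hi))) := by
  rw [rankedType_split c k hx, optIoo_inter_Iio hx, optIoo_inter_Ioi hx]

theorem mem_optIoo_map {X M : Type} [LinearOrder M] (g : X → M) {lo hi : Option X} {z : M} :
    z ∈ optIoo (lo.map g) (hi.map g) ↔ (∀ u ∈ lo, g u < z) ∧ ∀ u ∈ hi, z < g u := by
  simp [optIoo]

theorem IsRankedPartialIso.insert [DecidableEq (A × B)] {K : ℕ} {f : Finset (A × B)}
    (hf : IsRankedPartialIso cA cB K f) {lo hi : Option (A × B)} (hlo : ∀ u ∈ lo, u ∈ f)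
    (hhi : ∀ u ∈ hi, u ∈ f) {m : A} {n : B}
    (hm : m ∈ optIoo (lo.map Prod.fst) (hi.map Prod.fst))
    (hn : n ∈ optIoo (lo.map Prod.snd) (hi.map Prod.snd))
    (hcov : ∀ p ∈ f, (∃ u ∈ lo, p.1 ≤ u.1) ∨ ∃ u ∈ hi, u.1 ≤ p.1)
    (hcol : colorSet cA m = colorSet cB n)
    (hl : rankedType cA K (optIoo (lo.map Prod.fst) (some m)) =
      rankedType cB K (optIoo (lo.map Prod.snd) (some n)))
    (hr : rankedType cA K (optIoo (some m) (hi.map Prod.fst)) =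
      rankedType cB K (optIoo (some n) (hi.map Prod.snd))) :
    IsRankedPartialIso cA cB K (insert (m, n) f) := by
  obtain ⟨hiso, hrank⟩ := hf
  rw [mem_optIoo_map] at hm hn
  have hcolf : ∀ p ∈ f, colorSet cA p.1 = colorSet cB p.2 := fun p hp =>
    Set.ext (hiso p hp p hp).2.2
  have hcov' : ∀ p ∈ f, (∃ u ∈ lo, p = u ∨ p.1 < u.1 ∧ p.2 < u.2) ∨
      ∃ u ∈ hi, p = u ∨ u.1 < p.1 ∧ u.2 < p.2 := by
    intro p hp
    refine (hcov p hp).imp ?_ ?_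
    · rintro ⟨u, hu, hpu⟩
      have := hiso p hp u (hlo u hu)
      refine ⟨u, hu, hpu.eq_or_lt.imp (fun h => Prod.ext h (this.2.1.1 h)) fun h =>
        ⟨h, this.1.1 h⟩⟩
    · rintro ⟨u, hu, hpu⟩
      have := hiso u (hhi u hu) p hp
      refine ⟨u, hu, hpu.eq_or_lt.imp (fun h => Prod.ext h.symm (this.2.1.1 h).symm) fun h =>
        ⟨h, this.1.1 h⟩⟩
  have hside : ∀ p ∈ f, (p.1 < m ∧ p.2 < n) ∨ (m < p.1 ∧ n < p.2) := by
    intro p hp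
    rcases hcov' p hp with ⟨u, hu, rfl | h⟩ | ⟨u, hu, rfl | h⟩
    · exact Or.inl ⟨hm.1 _ hu, hn.1 _ hu⟩
    · exact Or.inl ⟨h.1.trans (hm.1 _ hu), h.2.trans (hn.1 _ hu)⟩
    · exact Or.inr ⟨hm.2 _ hu, hn.2 _ hu⟩
    · exact Or.inr ⟨(hm.2 _ hu).trans h.1, (hn.2 _ hu).trans h.2⟩
  have hcm : ∀ k, m ∈ cA k ↔ n ∈ cB k := Set.ext_iff.1 hcol
  have hleft : ∀ p : Option (A × B), (∀ u ∈ p, u ∈ f) →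
      rankedType cA K (optIoo (p.map Prod.fst) (some m)) =
        rankedType cB K (optIoo (p.map Prod.snd) (some n)) := by
    intro p hp
    have hsplit : ∀ u ∈ lo, (∀ v ∈ p, v.1 < u.1 ∧ v.2 < u.2) →
        rankedType cA K (optIoo (p.map Prod.fst) (some m)) =
          rankedType cB K (optIoo (p.map Prod.snd) (some n)) := by
      rintro u hu hpu
      have h1 : u.1 ∈ optIoo (p.map Prod.fst) (some m) :=
        (mem_optIoo_map (hi := some (m, n)) Prod.fst).2
          ⟨fun v hv => (hpu v hv).1, fun v hv => by cases hv; exact hm.1 u hu⟩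
      have h2 : u.2 ∈ optIoo (p.map Prod.snd) (some n) :=
        (mem_optIoo_map (hi := some (m, n)) Prod.snd).2
          ⟨fun v hv => (hpu v hv).2, fun v hv => by cases hv; exact hn.1 u hu⟩
      have h3 := hrank p (some u) hp fun v hv => by cases hv; exact hlo u hu
      cases hu
      rw [rankedType_optIoo_split cA K h1, rankedType_optIoo_split cB K h2,
        hcolf u (hlo u rfl)]
      exact congrArg₂ _ h3 (congrArg _ hl)
    rcases p with _ | p
    · rcases lo with _ | u
      · exact hl
      · exact hsplit u rfl fun v hv => by cases hv
    · rcases hcov' p (hp p rfl) with ⟨u, hu, rfl | h⟩ | ⟨u, hu, h⟩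
      · cases hu
        exact hl
      · exact hsplit u hu fun v hv => by cases hv; exact h
      · have h1 := hm.2 u hu
        have h2 := hn.2 u hu
        have h3 : m < p.1 ∧ n < p.2 := by
          rcases h with rfl | h
          exacts [⟨h1, h2⟩, ⟨h1.trans h.1, h2.trans h.2⟩]
        simp only [Option.map_some]
        rw [optIoo_eq_empty h3.1.le, optIoo_eq_empty h3.2.le, rankedType_empty, rankedType_empty]
  have hright : ∀ p : Option (A × B), (∀ u ∈ p, u ∈ f) →
      rankedType cA K (optIoo (some m) (p.map Prod.fst)) =
        rankedType cB K (optIoo (some n) (p.map Prod.snd)) := by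
    intro p hp
    have hsplit : ∀ u ∈ hi, (∀ v ∈ p, u.1 < v.1 ∧ u.2 < v.2) →
        rankedType cA K (optIoo (some m) (p.map Prod.fst)) =
          rankedType cB K (optIoo (some n) (p.map Prod.snd)) := by
      rintro u hu hpu
      have h1 : u.1 ∈ optIoo (some m) (p.map Prod.fst) :=
        (mem_optIoo_map (lo := some (m, n)) Prod.fst).2
          ⟨fun v hv => by cases hv; exact hm.2 u hu, fun v hv => (hpu v hv).1⟩
      have h2 : u.2 ∈ optIoo (some n) (p.map Prod.snd) :=
        (mem_optIoo_map (lo := some (m, n)) Prod.snd).2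
          ⟨fun v hv => by cases hv; exact hn.2 u hu, fun v hv => (hpu v hv).2⟩
      have h3 := hrank (some u) p (fun v hv => by cases hv; exact hhi u hu) hp
      cases hu
      rw [rankedType_optIoo_split cA K h1, rankedType_optIoo_split cB K h2,
        hcolf u (hhi u rfl)]
      exact congrArg₂ _ hr (congrArg _ h3)
    rcases p with _ | p
    · rcases hi with _ | u
      · exact hr
      · exact hsplit u rfl fun v hv => by cases hv
    · rcases hcov' p (hp p rfl) with ⟨u, hu, h⟩ | ⟨u, hu, rfl | h⟩
      · have h1 := hm.1 u hu
        have h2 := hn.1 u hu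
        have h3 : p.1 < m ∧ p.2 < n := by
          rcases h with rfl | h
          exacts [⟨h1, h2⟩, ⟨h.1.trans h1, h.2.trans h2⟩]
        simp only [Option.map_some]
        rw [optIoo_eq_empty h3.1.le, optIoo_eq_empty h3.2.le, rankedType_empty, rankedType_empty]
      · cases hu
        exact hr
      · exact hsplit u hu fun v hv => by cases hv; exact h
  have hold : ∀ p : Option (A × B), (∀ u ∈ p, u ∈ Insert.insert (m, n) f) →
      p = some (m, n) ∨ ∀ u ∈ p, u ∈ f := by
    rintro (_ | p) hp
    · exact Or.inr fun u hu => by cases hu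
    · rcases Finset.mem_insert.1 (hp p rfl) with rfl | h
      · exact Or.inl rfl
      · exact Or.inr fun u hu => by cases hu; exact h
  refine ⟨fun p hp q hq => ?_, fun p q hp hq => ?_⟩
  · rcases Finset.mem_insert.1 hp with rfl | hp <;> rcases Finset.mem_insert.1 hq with rfl | hq
    · exact ⟨by simp, by simp, hcm⟩
    · rcases hside q hq with h | h
      · exact ⟨by simp [h.1.not_gt, h.2.not_gt], by simp [h.1.ne', h.2.ne'], hcm⟩
      · exact ⟨by simp [h.1, h.2], by simp [h.1.ne, h.2.ne], hcm⟩
    · refine ⟨?_, ?_, (hiso p hp p hp).2.2⟩ <;> rcases hside p hp with h | h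
      · simp [h.1, h.2]
      · simp [h.1.not_gt, h.2.not_gt]
      · simp [h.1.ne, h.2.ne]
      · simp [h.1.ne', h.2.ne']
    · exact hiso p hp q hq
  · rcases hold p hp with rfl | hp <;> rcases hold q hq with rfl | hq
    · simp only [Option.map_some]
      rw [optIoo_eq_empty le_rfl, optIoo_eq_empty le_rfl, rankedType_empty, rankedType_empty]
    · exact hright q hq
    · exact hleft p hp
    · exact hrank p q hp hq

/-- If rank `K` types of intervals determine rank `K + 1` types, then two structures of the same
rank `K` type are back-and-forth equivalent. -/
theorem backForthEquiv_of_rank {K : ℕ}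
    (hK : ∀ lo hi lo' hi', rankedType cA K (optIoo lo hi) = rankedType cB K (optIoo lo' hi') →
      rankedType cA (K + 1) (optIoo lo hi) = rankedType cB (K + 1) (optIoo lo' hi'))
    (h0 : rankedType cA K (optIoo none none) = rankedType cB K (optIoo none none)) :
    BackForthEquiv ι A cA B cB := by
  classical
  refine ⟨{f | IsRankedPartialIso cA cB K f}, ⟨∅, ?_, ?_⟩, fun f hf => hf.1, ?_, ?_⟩
  · exact fun p hp => absurd hp (Finset.notMem_empty p)
  · rintro (_ | p) (_ | q) hp hq
    · exact h0
    · exact absurd (hq q rfl) (Finset.notMem_empty q)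
    · exact absurd (hp p rfl) (Finset.notMem_empty p)
    · exact absurd (hp p rfl) (Finset.notMem_empty p)
  · intro f hf m
    by_cases hm : ∃ p ∈ f, p.1 = m
    · obtain ⟨p, hp, rfl⟩ := hm
      exact ⟨f, hf, subset_rfl, p.2, hp⟩
    obtain ⟨lo, hi, hlo, hhi, hmem, hcov⟩ :=
      exists_neighbours Prod.fst f (m := m) fun p hp h => hm ⟨p, hp, h⟩
    obtain ⟨n, hn, hcol, hl, hr⟩ := ((rankedType_succ_eq_iff cA cB K _ _).1
      (hK _ _ _ _ (hf.2 lo hi hlo hhi))).1 m hmem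
    rw [optIoo_inter_Iio hmem, optIoo_inter_Iio hn] at hl
    rw [optIoo_inter_Ioi hmem, optIoo_inter_Ioi hn] at hr
    exact ⟨_, hf.insert hlo hhi hmem hn hcov hcol hl hr, Finset.subset_insert _ _, n,
      Finset.mem_insert_self _ _⟩
  · intro f hf n
    by_cases hn : ∃ p ∈ f, p.2 = n
    · obtain ⟨p, hp, rfl⟩ := hn
      exact ⟨f, hf, subset_rfl, p.1, hp⟩
    obtain ⟨lo, hi, hlo, hhi, hmem, hcov⟩ :=
      exists_neighbours Prod.snd f (m := n) fun p hp h => hn ⟨p, hp, h⟩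
    obtain ⟨m, hm, hcol, hl, hr⟩ := ((rankedType_succ_eq_iff cA cB K _ _).1
      (hK _ _ _ _ (hf.2 lo hi hlo hhi))).2 n hmem
    rw [optIoo_inter_Iio hm, optIoo_inter_Iio hmem] at hl
    rw [optIoo_inter_Ioi hm, optIoo_inter_Ioi hmem] at hr
    have hle : ∀ p ∈ f, ∀ q ∈ f, p.2 ≤ q.2 → p.1 ≤ q.1 := fun p hp q hq h =>
      not_lt.1 fun hlt => h.not_gt ((hf.1 q hq p hp).1.1 hlt)
    refine ⟨_, hf.insert hlo hhi hm hmem (fun p hp => ?_) hcol hl hr, Finset.subset_insert _ _, m,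
      Finset.mem_insert_self _ _⟩
    exact (hcov p hp).imp (fun ⟨u, hu, h⟩ => ⟨u, hu, hle p hp u (hlo u hu) h⟩)
      fun ⟨u, hu, h⟩ => ⟨u, hu, hle u (hhi u hu) p hp h⟩

end BackAndForth

theorem stmt19 {ι : Type} [Finite ι] {M₀ : Type} [LinearOrder M₀] (c₀ : ι → Set M₀)
    (hLS : LocallySimple ι M₀ c₀) :
    Aleph0CatTheory ι (CLOTheory ι M₀ c₀) := by
  intro A B iA iB cA cB hA hB hAT hBT
  have hAB : CLOEquiv ι A cA B cB := cloEquiv_iff.2 (hAT.trans hBT.symm)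
  refine BackForthEquiv.cloIso ?_
  rcases isEmpty_or_nonempty M₀ with hM | hM
  · have hempty : ∀ (C : Type) [LinearOrder C] (cC : ι → Set C), CLOEquiv ι C cC M₀ c₀ →
        IsEmpty C := fun C _ cC hC => ⟨fun x => by
      obtain ⟨y, -⟩ := ((UniformlyDefinable.const (α := Empty ⊕ Unit) True).ex.iff_of_cloEquiv hC
        Empty.elim Empty.elim).1 ⟨x, trivial⟩
      exact hM.elim y⟩
    have := hempty A cA (cloEquiv_iff.2 hAT)
    have := hempty B cB (cloEquiv_iff.2 hBT)
    refine backForthEquiv_of_rank (K := 0) (fun lo hi lo' hi' _ => ?_) rfl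
    rw [eq_empty_of_isEmpty (optIoo lo hi), eq_empty_of_isEmpty (optIoo lo' hi'),
      rankedType_empty, rankedType_empty]
  · obtain ⟨K, hK⟩ := exists_rank_of_locallySimple hLS
    refine backForthEquiv_of_rank (hK A B cA cB (cloEquiv_iff.2 hAT) (cloEquiv_iff.2 hBT)) ?_
    exact (((uniformlyDefinable_rankedType K (α := Empty) none none _).iff_of_cloEquiv hAB
      Empty.elim Empty.elim).1 rfl).symm
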